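/- arXiv:math/9910158 — 2 statements merged into one kernel-verified Lean document; each statement's English description precedes it below -/
import Mathlib

section
/- Vaught's two-cardinal theorem: let T be a countable first-order theory in a language containing a unary predicate symbol P. If for some infinite cardinal λ the theory T has a model M with |M| = λ⁺ and |P^M| = λ, then T has a model N with |N| = ℵ₁ and |P^N| = ℵ₀. -/
open FirstOrder Language Cardinal

namespace VTC

open Set

section Def
universe u v w
variable {L : FirstOrder.Language.{u, v}} {M : Type w} [L.Structure M] {A B : Set M}

/-- Definable predicates. -/
def Dp {α : Type*} (L : FirstOrder.Language.{u, v}) [L.Structure M] (A : Set M)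
    (p : (α → M) → Prop) : Prop := A.Definable L {v | p v}

theorem Dp.and {α : Type*} {p q : (α → M) → Prop} (hp : Dp L A p) (hq : Dp L A q) :
    Dp L A (fun v => p v ∧ q v) := Set.Definable.inter hp hq

theorem Dp.not {α : Type*} {p : (α → M) → Prop} (hp : Dp L A p) :
    Dp L A (fun v => ¬ p v) := Set.Definable.compl hp

theorem Dp.ex {α : Type*} {p : (α → M) → M → Prop}
    (hp : Dp L A (fun w : α ⊕ Unit → M => p (w ∘ Sum.inl) (w (Sum.inr ())))) :
    Dp L A (fun v => ∃ y, p v y) := by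
  have := Set.Definable.exists_of_finite hp
  refine (congrArg (A.Definable L) ?_).mp this
  ext v
  constructor
  · rintro ⟨u, hu⟩
    exact ⟨u (), hu⟩
  · rintro ⟨y, hy⟩
    exact ⟨fun _ => y, hy⟩

theorem Dp.all {α : Type*} {p : (α → M) → M → Prop}
    (hp : Dp L A (fun w : α ⊕ Unit → M => p (w ∘ Sum.inl) (w (Sum.inr ())))) :
    Dp L A (fun v => ∀ y, p v y) := by
  have := Set.Definable.forall_of_finite hp
  refine (congrArg (A.Definable L) ?_).mp this
  ext v
  constructor
  · intro h y
    exact h (fun _ => y)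
  · intro h u
    exact h (u ())

theorem Dp.mem₁ {α : Type*} {S : Set M} (hS : A.Definable₁ L S) (i : α) :
    Dp L A (fun v : α → M => v i ∈ S) :=
  Set.Definable.preimage_comp (fun _ : Fin 1 => i) hS

theorem Dp.mem₂ {α : Type*} {S : Set (M × M)} (hS : A.Definable₂ L S) (i j : α) :
    Dp L A (fun v : α → M => (v i, v j) ∈ S) :=
  Set.Definable.preimage_comp (![i, j] : Fin 2 → α) hS

theorem Dp.eqc {α : Type*} {c : M} (hc : c ∈ A) (i : α) :
    Dp L A (fun v : α → M => v i = c) :=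
  Dp.mem₁ (Set.Definable.singleton_of_mem L hc) i

theorem Dp.rel₁ {α : Type*} (P : L.Relations 1) (i : α) :
    Dp L A (fun v : α → M => Structure.RelMap P ![v i]) := by
  refine Set.definable_iff_exists_formula_sum.2
    ⟨P.formula₁ (Term.var (Sum.inr i)), ?_⟩
  ext v
  simp [Formula.realize_rel₁]

theorem Dp.rel₂ {α : Type*} (r : L.Relations 2) (i j : α) :
    Dp L A (fun v : α → M => Structure.RelMap r ![v i, v j]) := by
  refine Set.definable_iff_exists_formula_sum.2
    ⟨r.formula₂ (Term.var (Sum.inr i)) (Term.var (Sum.inr j)), ?_⟩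
  ext v
  simp [Formula.realize_rel₂]

theorem dcl_trans {α : Type*} {s : Set (α → M)} (h : B.Definable L s)
    (hB : ∀ b ∈ B, A.Definable₁ L {b}) : A.Definable L s := by
  obtain ⟨B0, hB0, h0⟩ := Set.definable_iff_finitely_definable.1 h
  obtain ⟨φ, rfl⟩ := Set.definable_iff_exists_formula_sum.1 h0
  have h1 : A.Definable L (⋂ b : B0, {w : α ⊕ B0 → M | w (Sum.inr b) = b}) := by
    refine Set.definable_iInter_of_finite fun b => ?_
    exact Dp.mem₁ (hB b (hB0 b.2)) (Sum.inr b : α ⊕ B0)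
  have h2 : A.Definable L {w : α ⊕ B0 → M | φ.Realize (Sum.elim (w ∘ Sum.inr) (w ∘ Sum.inl))} := by
    have : (∅ : Set M).Definable L
      {w : α ⊕ B0 → M | φ.Realize (Sum.elim (w ∘ Sum.inr) (w ∘ Sum.inl))} := by
      refine Set.empty_definable_iff.2 ⟨φ.relabel Sum.swap, ?_⟩
      ext w
      simp only [Set.mem_ofPred_eq, Formula.realize_relabel]
      have : Sum.elim (w ∘ Sum.inr) (w ∘ Sum.inl) = w ∘ (Sum.swap : B0 ⊕ α → α ⊕ B0) := by
        ext x; rcases x with x | x <;> rfl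
      exact iff_of_eq (congrArg _ this)
    exact this.mono (Set.empty_subset _)
  have := Set.Definable.exists_of_finite (h1.inter h2)
  refine (congrArg (A.Definable L) ?_).mp this
  ext v
  constructor
  · rintro ⟨u, hu1, hu2⟩
    have : u = Subtype.val := by
      ext b
      exact Set.mem_iInter.1 hu1 b
    subst this
    exact hu2
  · intro hv
    exact ⟨Subtype.val, Set.mem_iInter.2 fun b => rfl, hv⟩

theorem fibre {N : Set M} {a : M} {S : Set M} (h : (insert a N).Definable₁ L S) :
    ∃ R : Set (M × M), N.Definable₂ L R ∧ ∀ y, (a, y) ∈ R ↔ y ∈ S := by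
  classical
  obtain ⟨φ, hφ⟩ := Set.definable_iff_exists_formula_sum.1 h
  let g : ((insert a N : Set M) : Type w) ⊕ Fin 1 → N ⊕ Fin 2 :=
    Sum.elim (fun c => if hc : (c : M) ∈ N then Sum.inl ⟨c, hc⟩ else Sum.inr 0) (fun _ => Sum.inr 1)
  refine ⟨{q | (φ.relabel g).Realize (Sum.elim (fun c : N => (c : M)) ![q.1, q.2])}, ?_, ?_⟩
  · refine Set.definable_iff_exists_formula_sum.2 ⟨φ.relabel g, ?_⟩
    ext v
    have : ![v 0, v 1] = v := by ext i; fin_cases i <;> rfl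
    simp [this]
  · intro y
    have h2 : (fun _ : Fin 1 => y) ∈ {x : Fin 1 → M | x 0 ∈ S} ↔ y ∈ S := Iff.rfl
    rw [← h2, hφ]
    simp only [Set.mem_ofPred_eq, Formula.realize_relabel]
    refine iff_of_eq (congrArg _ ?_)
    ext x
    rcases x with ⟨c, hc⟩ | x
    · by_cases hcN : c ∈ N
      · simp [g, hcN]
      · have : c = a := by simpa [hcN] using hc
        subst this
        simp [g, hcN]
    · simp [g]

end Def

section Step
universe u v w
variable {L : FirstOrder.Language.{u, v}} {M : Type w} [L.Structure M]

/-- Abstract properties of the big model. -/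
structure Good (P : L.Relations 1) (r : L.Relations 2) (M : Type w) [L.Structure M] : Prop where
  scheme : ∀ R : Set (M × M), Set.univ.Definable₂ L R →
    (∀ z, ∃ x, Structure.RelMap r ![z, x] ∧ ∃ y, Structure.RelMap P ![y] ∧ (x, y) ∈ R) →
    ∃ y, Structure.RelMap P ![y] ∧ ∀ z, ∃ x, Structure.RelMap r ![z, x] ∧ (x, y) ∈ R
  least : ∀ S : Set M, Set.univ.Definable₁ L S → S.Nonempty →
    ∃ b ∈ S, ∀ y ∈ S, y ≠ b → Structure.RelMap r ![b, y]
  asymm : ∀ x y : M, Structure.RelMap r ![x, y] → ¬ Structure.RelMap r ![y, x]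
  trans : ∀ x y z : M, Structure.RelMap r ![x, y] → Structure.RelMap r ![y, z] →
    Structure.RelMap r ![x, z]
  dir : ∀ x y : M, ∃ z, Structure.RelMap r ![x, z] ∧ Structure.RelMap r ![y, z]
  sat : ∀ S : ℕ → Set M, (∀ n, Set.univ.Definable₁ L (S n)) → (∀ n, (S n).Nonempty) →
    (∀ n, S (n + 1) ⊆ S n) → ∃ x, ∀ n, x ∈ S n

variable {P : L.Relations 1} {r : L.Relations 2}

theorem refine_step (G : Good P r M) {N : Set M} (hN : L.MeetsDefinable N)
    {S : Set M} (hS : N.Definable₁ L S)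
    (hu : ∀ z, ∃ x, Structure.RelMap r ![z, x] ∧ x ∈ S)
    {R : Set (M × M)} (hR : N.Definable₂ L R) {c : M} (hc : c ∈ N) :
    ∃ S' ⊆ S, N.Definable₁ L S' ∧ (∀ z, ∃ x, Structure.RelMap r ![z, x] ∧ x ∈ S') ∧
      (∀ x ∈ S', Structure.RelMap r ![c, x]) ∧
      ((∀ x ∈ S', ∀ y, Structure.RelMap P ![y] → (x, y) ∉ R) ∨
        ∃ d ∈ N, Structure.RelMap P ![d] ∧ ∀ x ∈ S', (x, d) ∈ R) := by
  -- first cut above c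
  let S1 : Set M := {x | x ∈ S ∧ Structure.RelMap r ![c, x]}
  have hS1 : N.Definable₁ L S1 := by
    refine Dp.and (Dp.mem₁ hS (0 : Fin 1)) ?_
    have : Dp L N (fun v : Fin 1 → M => ∃ y, y = c ∧ Structure.RelMap r ![y, v 0]) := by
      refine Dp.ex (Dp.and ?_ ?_)
      · exact Dp.eqc hc _
      · exact Dp.rel₂ r (Sum.inr ()) (Sum.inl 0)
    simpa using this
  have hu1 : ∀ z, ∃ x, Structure.RelMap r ![z, x] ∧ x ∈ S1 := by
    intro z
    obtain ⟨w, hw1, hw2⟩ := G.dir z c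
    obtain ⟨x, hx1, hx2⟩ := hu w
    exact ⟨x, G.trans _ _ _ hw1 hx1, hx2, G.trans _ _ _ hw2 hx1⟩
  let R1 : Set (M × M) := {q | q.1 ∈ S1 ∧ q ∈ R}
  have hR1 : N.Definable₂ L R1 :=
    Dp.and (Dp.mem₁ hS1 (0 : Fin 2)) (Dp.mem₂ hR (0 : Fin 2) 1)
  by_cases hcase : ∀ z, ∃ x, Structure.RelMap r ![z, x] ∧
      ∃ y, Structure.RelMap P ![y] ∧ (x, y) ∈ R1
  · obtain ⟨y, hy⟩ := G.scheme R1 (hR1.mono (Set.subset_univ _)) hcase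
    let D : Set M := {y | Structure.RelMap P ![y] ∧
      ∀ z, ∃ x, Structure.RelMap r ![z, x] ∧ (x, y) ∈ R1}
    have hD : N.Definable₁ L D := by
      refine Dp.and (Dp.rel₁ P (0 : Fin 1)) (Dp.all (Dp.ex (Dp.and ?_ ?_)))
      · exact Dp.rel₂ r (Sum.inl (Sum.inr ())) (Sum.inr ())
      · exact Dp.mem₂ hR1 (Sum.inr ()) (Sum.inl (Sum.inl 0))
    obtain ⟨d, ⟨hdP, hd⟩, hdN⟩ := hN D ⟨y, hy⟩ hD
    refine ⟨{x | (x, d) ∈ R1}, fun x hx => hx.1.1, ?_, hd, fun x hx => hx.1.2,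
      Or.inr ⟨d, hdN, hdP, fun x hx => hx.2⟩⟩
    have : Dp L N (fun v : Fin 1 → M => ∃ y, y = d ∧ (v 0, y) ∈ R1) := by
      refine Dp.ex (Dp.and ?_ ?_)
      · exact Dp.eqc hdN _
      · exact Dp.mem₂ hR1 (Sum.inl 0) (Sum.inr ())
    simp only [exists_eq_left] at this
    exact this
  · push Not at hcase
    obtain ⟨z0, hz0⟩ := hcase
    refine ⟨{x | x ∈ S1 ∧ ¬ ∃ y, Structure.RelMap P ![y] ∧ (x, y) ∈ R}, fun x hx => hx.1.1, ?_, ?_,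
      fun x hx => hx.1.2, Or.inl fun x hx y hy hxy => hx.2 ⟨y, hy, hxy⟩⟩
    · refine Dp.and (Dp.mem₁ hS1 (0 : Fin 1)) (Dp.not (Dp.ex (Dp.and ?_ ?_)))
      · exact Dp.rel₁ P _
      · exact Dp.mem₂ hR (Sum.inl 0) (Sum.inr ())
    · intro z
      obtain ⟨w, hw1, hw2⟩ := G.dir z z0
      obtain ⟨x, hx1, hx2⟩ := hu1 w
      refine ⟨x, G.trans _ _ _ hw1 hx1, hx2, ?_⟩
      rintro ⟨y, hy, hxy⟩
      exact hz0 x (G.trans _ _ _ hw2 hx1) y hy ⟨hx2, hxy⟩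

theorem countable_formula [Countable L.Symbols] {α : Type*} [Countable α] :
    Countable (L.Formula α) := by
  have h := BoundedFormula.card_le (L := L) (α := α)
  have h2 : L.card ≤ ℵ₀ := Cardinal.mk_le_aleph0_iff.2 inferInstance
  have h3 : #α ≤ ℵ₀ := Cardinal.mk_le_aleph0_iff.2 inferInstance
  have : Countable (Σ n, L.BoundedFormula α n) := by
    rw [← Cardinal.mk_le_aleph0_iff]
    refine h.trans (max_le le_rfl ?_)
    exact Cardinal.add_le_aleph0.2 ⟨by simpa using h3, by simpa using h2⟩
  exact Function.Injective.countable (f := fun φ : L.Formula α =>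
    (⟨0, φ⟩ : Σ n, L.BoundedFormula α n)) (fun a b hab => by simpa using hab)

theorem exists_new [Countable L.Symbols] (G : Good P r M) {N : Set M} (hN : L.MeetsDefinable N)
    (hc : N.Countable) (hne : N.Nonempty) :
    ∃ a, (∀ c ∈ N, Structure.RelMap r ![c, a]) ∧
      ∀ R : Set (M × M), N.Definable₂ L R → ∀ y, Structure.RelMap P ![y] → (a, y) ∈ R →
        ∃ d ∈ N, Structure.RelMap P ![d] ∧ (a, d) ∈ R := by
  have := hc.to_subtype
  have := hne.to_subtype
  have : Countable (L.Formula (N ⊕ Fin 2)) := countable_formula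
  have : Nonempty (L.Formula (N ⊕ Fin 2)) := ⟨⊥⟩
  obtain ⟨e, he⟩ := exists_surjective_nat (L.Formula (N ⊕ Fin 2) × N)
  let Rf : L.Formula (N ⊕ Fin 2) → Set (M × M) :=
    fun φ => {q | φ.Realize (Sum.elim (fun c : N => (c : M)) ![q.1, q.2])}
  have hRf : ∀ φ, N.Definable₂ L (Rf φ) := by
    intro φ
    refine Set.definable_iff_exists_formula_sum.2 ⟨φ, ?_⟩
    ext v
    have : ![v 0, v 1] = v := by ext i; fin_cases i <;> rfl
    simp [Rf, this]
  have hsurj : ∀ R, N.Definable₂ L R → ∃ φ, Rf φ = R := by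
    intro R hR
    obtain ⟨φ, hφ⟩ := Set.definable_iff_exists_formula_sum.1 hR
    refine ⟨φ, ?_⟩
    ext ⟨x, y⟩
    have h2 : ![x, y] ∈ {x : Fin 2 → M | (x 0, x 1) ∈ R} ↔ (x, y) ∈ R := Iff.rfl
    rw [← h2, hφ]
    rfl
  let X := {S : Set M // N.Definable₁ L S ∧ ∀ z, ∃ x, Structure.RelMap r ![z, x] ∧ x ∈ S}
  have hstep : ∀ (n : ℕ) (S : X), ∃ S' : X, S'.1 ⊆ S.1 ∧
      (∀ x ∈ S'.1, Structure.RelMap r ![((e n).2 : M), x]) ∧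
      ((∀ x ∈ S'.1, ∀ y, Structure.RelMap P ![y] → (x, y) ∉ Rf (e n).1) ∨
        ∃ d ∈ N, Structure.RelMap P ![d] ∧ ∀ x ∈ S'.1, (x, d) ∈ Rf (e n).1) := by
    intro n S
    obtain ⟨S', h1, h2, h3, h4⟩ := refine_step G hN S.2.1 S.2.2 (hRf (e n).1) (e n).2.2
    exact ⟨⟨S', h2, h3⟩, h1, h4⟩
  choose nxt hnxt using hstep
  let S0 : X := ⟨Set.univ, by simp [Set.Definable₁],
    fun z => by obtain ⟨x, hx, -⟩ := G.dir z z; exact ⟨x, hx, trivial⟩⟩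
  let Q : ℕ → X := fun n => Nat.rec S0 (fun n S => nxt n S) n
  have hQ : ∀ n, Q (n + 1) = nxt n (Q n) := fun n => rfl
  obtain ⟨a, ha⟩ := G.sat (fun n => (Q n).1) (fun n => (Q n).2.1.mono (Set.subset_univ _))
    (fun n => by
      obtain ⟨x, -, hx⟩ := (Q n).2.2 hne.some
      exact ⟨x, hx⟩)
    (fun n => by
      simp only [hQ]
      exact (hnxt n (Q n)).1)
  refine ⟨a, ?_, ?_⟩
  · intro c hc
    obtain ⟨n, hn⟩ := he (⊥, ⟨c, hc⟩)
    have := (hnxt n (Q n)).2.1 a (ha (n + 1))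
    simpa [hn] using this
  · intro R hR y hy hay
    obtain ⟨φ, rfl⟩ := hsurj R hR
    obtain ⟨n, hn⟩ := he (φ, ⟨hne.some, hne.some_mem⟩)
    rcases (hnxt n (Q n)).2.2 with h | ⟨d, hd, hdP, h⟩
    · exact absurd (by simpa [hn] using hay) (h a (ha (n + 1)) y hy)
    · exact ⟨d, hd, hdP, by simpa [hn] using h a (ha (n + 1))⟩

theorem one_step [Countable L.Symbols] (G : Good P r M) {N : Set M} (hN : L.MeetsDefinable N)
    (hc : N.Countable) (hne : N.Nonempty) :
    ∃ N', L.MeetsDefinable N' ∧ N ⊆ N' ∧ N' ≠ N ∧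
      ∀ b ∈ N', Structure.RelMap P ![b] → b ∈ N := by
  obtain ⟨a, ha1, ha2⟩ := exists_new G hN hc hne
  refine ⟨{b | (insert a N).Definable₁ L {b}}, ?_, ?_, ?_, ?_⟩
  · intro D hDne hD
    obtain ⟨b, hbD, hb⟩ := G.least D (hD.mono (Set.subset_univ _)) hDne
    refine ⟨b, hbD, ?_⟩
    have h1 : Set.Definable₁ {b | (insert a N).Definable₁ L {b}} L {b} := by
      have : Dp L {b | (insert a N).Definable₁ L {b}}
        (fun v : Fin 1 → M => v 0 ∈ D ∧ ¬ ∃ y, y ∈ D ∧ Structure.RelMap r ![y, v 0]) := by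
        refine Dp.and (Dp.mem₁ hD _) (Dp.not (Dp.ex (Dp.and ?_ ?_)))
        · exact Dp.mem₁ hD _
        · exact Dp.rel₂ r (Sum.inr ()) (Sum.inl 0)
      refine (congrArg (Set.Definable _ L) ?_).mp this
      ext v
      constructor
      · rintro ⟨h1, h2⟩
        by_contra h3
        exact h2 ⟨b, hbD, hb _ h1 h3⟩
      · intro h
        have h : v 0 = b := h
        refine ⟨h ▸ hbD, ?_⟩
        rintro ⟨y, hy, hyv⟩
        rw [h] at hyv
        by_cases hyb : y = b
        · subst hyb
          exact G.asymm _ _ hyv hyv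
        · exact G.asymm _ _ hyv (hb y hy hyb)
    exact dcl_trans h1 fun b hb => hb
  · intro c hc
    exact Set.Definable.singleton_of_mem L (Set.mem_insert_of_mem _ hc)
  · intro h
    have : a ∈ N := by
      rw [← h]
      exact Set.Definable.singleton_of_mem L (Set.mem_insert _ _)
    have := ha1 a this
    exact G.asymm _ _ this this
  · intro b hb hbP
    obtain ⟨R, hR, hRb⟩ := fibre hb
    obtain ⟨d, hdN, -, hd⟩ := ha2 R hR b hbP ((hRb b).2 rfl)
    have : d = b := (hRb d).1 hd
    exact this ▸ hdN

theorem union_chain {c : Set (Set M)} (hc : IsChain (· ⊆ ·) c) (hne : c.Nonempty)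
    (h : ∀ N ∈ c, L.MeetsDefinable N) : L.MeetsDefinable (⋃₀ c) := by
  intro D hD hdef
  obtain ⟨B0, hB0, h0⟩ := Set.definable_iff_finitely_definable.1 hdef
  obtain ⟨N, hN, hBN⟩ := DirectedOn.exists_mem_subset_of_finite_of_subset_sUnion hne hc.directedOn
    B0.finite_toSet hB0
  obtain ⟨x, hx1, hx2⟩ := h N hN D hD (Set.Definable.mono h0 hBN)
  exact ⟨x, hx1, N, hN, hx2⟩

theorem big_sub [Countable L.Symbols] (G : Good P r M) {N0 : Set M} (hN0 : L.MeetsDefinable N0)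
    (hne : N0.Nonempty) :
    ∃ N, L.MeetsDefinable N ∧ N0 ⊆ N ∧ ¬ N.Countable ∧
      ∀ b ∈ N, Structure.RelMap P ![b] → b ∈ N0 := by
  obtain ⟨N, hsub, hmax⟩ := zorn_subset_nonempty
    {N | L.MeetsDefinable N ∧ ∀ b ∈ N, Structure.RelMap P ![b] → b ∈ N0}
    (fun c hcs hc hcne => ⟨⋃₀ c, ⟨union_chain hc hcne fun N hN => (hcs hN).1,
      fun b ⟨N, hN, hb⟩ hbP => (hcs hN).2 b hb hbP⟩, fun s hs => Set.subset_sUnion_of_mem hs⟩)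
    N0 ⟨hN0, fun b hb _ => hb⟩
  refine ⟨N, hmax.prop.1, hsub, ?_, hmax.prop.2⟩
  intro hcount
  obtain ⟨N', h1, h2, h3, h4⟩ := one_step G hmax.prop.1 hcount (hne.mono hsub)
  exact h3 (hmax.eq_of_subset ⟨h1, fun b hb hbP => hmax.prop.2 b (h4 b hb hbP) hbP⟩ h2).symm

end Step
section Ultra
universe u v w
variable {L : FirstOrder.Language.{u, v}} {M : Type w} [L.Structure M]
variable {P : L.Relations 1} {r : L.Relations 2}

/-- Second-order version of `Good`, for the original model. -/
structure FullGood (P : L.Relations 1) (r : L.Relations 2) (M : Type w) [L.Structure M] :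
    Prop where
  scheme : ∀ R : Set (M × M),
    (∀ z, ∃ x, Structure.RelMap r ![z, x] ∧ ∃ y, Structure.RelMap P ![y] ∧ (x, y) ∈ R) →
    ∃ y, Structure.RelMap P ![y] ∧ ∀ z, ∃ x, Structure.RelMap r ![z, x] ∧ (x, y) ∈ R
  least : ∀ S : Set M, S.Nonempty →
    ∃ b ∈ S, ∀ y ∈ S, y ≠ b → Structure.RelMap r ![b, y]
  asymm : ∀ x y : M, Structure.RelMap r ![x, y] → ¬ Structure.RelMap r ![y, x]
  trans : ∀ x y z : M, Structure.RelMap r ![x, y] → Structure.RelMap r ![y, z] →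
    Structure.RelMap r ![x, z]
  dir : ∀ x y : M, ∃ z, Structure.RelMap r ![x, z] ∧ Structure.RelMap r ![y, z]

open Filter

/-- The ultrapower. -/
abbrev UP (M : Type w) : Type w :=
  ((hyperfilter ℕ : Ultrafilter ℕ) : Filter ℕ).Product (fun _ : ℕ => M)

/-- The class of a sequence. -/
noncomputable def cl (x : ℕ → M) : UP M := (x : ((hyperfilter ℕ : Ultrafilter ℕ) : Filter ℕ).Product (fun _ => M))

theorem cl_surj (y : UP M) : ∃ x : ℕ → M, cl x = y := Quotient.exists_rep y

theorem cl_eq {x y : ℕ → M} : cl x = cl y ↔ ∀ᶠ i in (hyperfilter ℕ : Filter ℕ), x i = y i :=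
  Quotient.eq''

variable [Nonempty M]

theorem realize_cl {β : Type*} (φ : L.Formula β) (x : β → ℕ → M) :
    (φ.Realize (fun i => cl (x i))) ↔
      ∀ᶠ a in (hyperfilter ℕ : Filter ℕ), φ.Realize fun i => x i a :=
  Ultraproduct.realize_formula_cast φ x

theorem rel₁_cl (x : ℕ → M) : Structure.RelMap P ![cl x] ↔
    ∀ᶠ i in (hyperfilter ℕ : Filter ℕ), Structure.RelMap P ![x i] := by
  have := realize_cl (P.formula₁ (Term.var (0 : Fin 1))) (fun _ => x)
  simpa [Formula.realize_rel₁] using this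

theorem rel₂_cl (x y : ℕ → M) : Structure.RelMap r ![cl x, cl y] ↔
    ∀ᶠ i in (hyperfilter ℕ : Filter ℕ), Structure.RelMap r ![x i, y i] := by
  have := realize_cl (r.formula₂ (Term.var (0 : Fin 2)) (Term.var 1)) ![x, y]
  simpa [Formula.realize_rel₂] using this

theorem internal {α : Type*} {S : Set (α → UP M)} (hS : Set.univ.Definable L S) :
    ∃ s : ℕ → Set (α → M), ∀ v : α → ℕ → M,
      (fun j => cl (v j)) ∈ S ↔ ∀ᶠ i in (hyperfilter ℕ : Filter ℕ), (fun j => v j i) ∈ s i := by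
  obtain ⟨φ, rfl⟩ := Set.definable_iff_exists_formula_sum.1 hS
  choose o ho using (cl_surj (M := M))
  refine ⟨fun i => {v | φ.Realize (Sum.elim (fun c => o c.1 i) v)}, fun v => ?_⟩
  have := realize_cl φ (Sum.elim (fun c => o c.1) v)
  have e1 : (fun i => cl (Sum.elim (fun c : (Set.univ : Set (UP M)) => o c.1) v i)) =
      Sum.elim Subtype.val (fun j => cl (v j)) := by
    ext x; rcases x with x | x
    · exact ho _
    · rfl
  have e2 : ∀ a, (fun i => Sum.elim (fun c : (Set.univ : Set (UP M)) => o c.1) v i a) =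
      Sum.elim (fun c => o c.1 a) (fun j => v j a) := by
    intro a
    ext x; rcases x with x | x <;> rfl
  rw [e1] at this
  simp only [e2] at this
  exact this

theorem internal₁ {S : Set (UP M)} (hS : Set.univ.Definable₁ L S) :
    ∃ s : ℕ → Set M, ∀ v : ℕ → M,
      cl v ∈ S ↔ ∀ᶠ i in (hyperfilter ℕ : Filter ℕ), v i ∈ s i := by
  obtain ⟨s, hs⟩ := internal hS
  exact ⟨fun i => {x | (fun _ => x) ∈ s i}, fun v => hs (fun _ => v)⟩

theorem internal₂ {S : Set (UP M × UP M)} (hS : Set.univ.Definable₂ L S) :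
    ∃ s : ℕ → Set (M × M), ∀ v w : ℕ → M,
      (cl v, cl w) ∈ S ↔ ∀ᶠ i in (hyperfilter ℕ : Filter ℕ), (v i, w i) ∈ s i := by
  obtain ⟨s, hs⟩ := internal hS
  refine ⟨fun i => {q | ![q.1, q.2] ∈ s i}, fun v w => ?_⟩
  have := hs ![v, w]
  have e : ∀ i, (fun j => (![v, w] : Fin 2 → ℕ → M) j i) = ![v i, w i] := by
    intro i; ext j; fin_cases j <;> rfl
  simp only [e] at this
  exact this

/-- pointwise choice -/
theorem ev_choose {p : ℕ → M → Prop}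
    (h : ∀ᶠ i in (hyperfilter ℕ : Filter ℕ), ∃ x, p i x) :
    ∃ x : ℕ → M, ∀ᶠ i in (hyperfilter ℕ : Filter ℕ), p i (x i) :=
  ⟨fun i => Classical.epsilon (p i), h.mono fun _ hi => Classical.epsilon_spec hi⟩

theorem ev_all {p : ℕ → M → Prop}
    (h : ∀ x : ℕ → M, ∀ᶠ i in (hyperfilter ℕ : Filter ℕ), p i (x i)) :
    ∀ᶠ i in (hyperfilter ℕ : Filter ℕ), ∀ x, p i x := by
  by_contra hc
  rw [← Ultrafilter.eventually_not] at hc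
  simp only [not_forall] at hc
  obtain ⟨x, hx⟩ := ev_choose hc
  obtain ⟨i, h1, h2⟩ := ((h x).and hx).exists
  exact h2 h1

theorem ultra_sat (s : ℕ → ℕ → Set M)
    (h : ∀ n, ∀ᶠ i in (hyperfilter ℕ : Filter ℕ), ∃ x, ∀ k ≤ n, x ∈ s k i) :
    ∃ x : ℕ → M, ∀ n, ∀ᶠ i in (hyperfilter ℕ : Filter ℕ), x i ∈ s n i := by
  classical
  have key : ∀ i : ℕ, ∃ x : M, ∀ n ≤ i, (∃ y, ∀ k ≤ n, y ∈ s k i) → x ∈ s n i := by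
    intro i
    let m := Nat.findGreatest (fun n => ∃ y, ∀ k ≤ n, y ∈ s k i) i
    by_cases h0 : ∃ n ≤ i, ∃ y, ∀ k ≤ n, y ∈ s k i
    · obtain ⟨n, hn, hy⟩ := h0
      obtain ⟨x, hx⟩ := Nat.findGreatest_spec (P := fun n => ∃ y, ∀ k ≤ n, y ∈ s k i) hn hy
      refine ⟨x, fun n hn hy => hx n ?_⟩
      exact Nat.le_findGreatest hn hy
    · push Not at h0
      refine ⟨Classical.arbitrary M, fun n hn ⟨y, hy⟩ => ?_⟩
      obtain ⟨k, hk, hk2⟩ := h0 n hn y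
      exact absurd (hy k hk) hk2
  choose x hx using key
  refine ⟨x, fun n => ?_⟩
  have hge : ∀ᶠ i in (hyperfilter ℕ : Filter ℕ), n ≤ i := by
    have : ∀ᶠ i in atTop, n ≤ i := eventually_ge_atTop n
    rw [← Nat.cofinite_eq_atTop] at this
    exact this.filter_mono hyperfilter_le_cofinite
  filter_upwards [hge, h n] with i h1 h2
  exact hx i n h1 h2

theorem good_ultra (F : FullGood P r M) : Good P r (UP M) where
  scheme := by
    intro R hR h
    obtain ⟨s, hs⟩ := internal₂ hR
    have h1 : ∀ᶠ i in (hyperfilter ℕ : Filter ℕ), ∀ z, ∃ x, Structure.RelMap r ![z, x] ∧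
        ∃ y, Structure.RelMap P ![y] ∧ (x, y) ∈ s i := by
      refine ev_all fun z => ?_
      obtain ⟨x, hx, y, hy, hxy⟩ := h (cl z)
      obtain ⟨x, rfl⟩ := cl_surj x
      obtain ⟨y, rfl⟩ := cl_surj y
      filter_upwards [(rel₂_cl _ _).1 hx, (rel₁_cl _).1 hy, (hs _ _).1 hxy] with i h1 h2 h3
      exact ⟨_, h1, _, h2, h3⟩
    obtain ⟨y, hy⟩ := ev_choose (h1.mono fun i hi => F.scheme (s i) hi)
    refine ⟨cl y, (rel₁_cl _).2 (hy.mono fun i hi => hi.1), fun z => ?_⟩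
    obtain ⟨z, rfl⟩ := cl_surj z
    obtain ⟨x, hx⟩ := ev_choose (hy.mono fun i hi => hi.2 (z i))
    exact ⟨cl x, (rel₂_cl _ _).2 (hx.mono fun i hi => hi.1),
      (hs _ _).2 (hx.mono fun i hi => hi.2)⟩
  least := by
    intro S hS hne
    obtain ⟨s, hs⟩ := internal₁ hS
    obtain ⟨x, hx⟩ := hne
    obtain ⟨x, rfl⟩ := cl_surj x
    have h1 := (hs _).1 hx
    obtain ⟨b, hb⟩ := ev_choose (h1.mono fun i hi => F.least (s i) ⟨x i, hi⟩)
    refine ⟨cl b, (hs _).2 (hb.mono fun i hi => hi.1), fun y hy hyb => ?_⟩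
    obtain ⟨y, rfl⟩ := cl_surj y
    have hyb : ¬ _ := fun h => hyb (cl_eq.2 h)
    rw [← Ultrafilter.eventually_not] at hyb
    refine (rel₂_cl _ _).2 ?_
    filter_upwards [hb, (hs _).1 hy, hyb] with i h1 h2 h3
    exact h1.2 _ h2 h3
  asymm := by
    intro x y h1 h2
    obtain ⟨x, rfl⟩ := cl_surj x
    obtain ⟨y, rfl⟩ := cl_surj y
    obtain ⟨i, h1, h2⟩ := (((rel₂_cl _ _).1 h1).and ((rel₂_cl _ _).1 h2)).exists
    exact F.asymm _ _ h1 h2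
  trans := by
    intro x y z h1 h2
    obtain ⟨x, rfl⟩ := cl_surj x
    obtain ⟨y, rfl⟩ := cl_surj y
    obtain ⟨z, rfl⟩ := cl_surj z
    refine (rel₂_cl _ _).2 ?_
    filter_upwards [(rel₂_cl _ _).1 h1, (rel₂_cl _ _).1 h2] with i h1 h2
    exact F.trans _ _ _ h1 h2
  dir := by
    intro x y
    obtain ⟨x, rfl⟩ := cl_surj x
    obtain ⟨y, rfl⟩ := cl_surj y
    choose z hz using F.dir
    exact ⟨cl fun i => z (x i) (y i), (rel₂_cl _ _).2 (.of_forall fun i => (hz _ _).1),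
      (rel₂_cl _ _).2 (.of_forall fun i => (hz _ _).2)⟩
  sat := by
    intro S hS hne hdec
    have hanti : Antitone S := antitone_nat_of_succ_le hdec
    choose s hs using fun n => internal₁ (hS n)
    obtain ⟨x, hx⟩ := ultra_sat s (fun n => by
      obtain ⟨x, hx⟩ := hne n
      obtain ⟨x, rfl⟩ := cl_surj x
      have : ∀ k ∈ Set.Iic n, ∀ᶠ i in (hyperfilter ℕ : Filter ℕ), x i ∈ s k i :=
        fun k hk => (hs k _).1 (hanti hk hx)
      have := (Filter.eventually_all_finite (Set.finite_Iic n)).2 this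
      exact this.mono fun i hi => ⟨x i, hi⟩)
    exact ⟨cl x, fun n => (hs n x).2 (hx n)⟩

theorem up_equiv : L.ElementarilyEquivalent (UP M) M := by
  rw [elementarilyEquivalent_iff]
  intro φ
  refine (Ultraproduct.sentence_realize φ).trans ?_
  simp

end Ultra


section Core
universe u v w
variable {L : FirstOrder.Language.{u, v}} {M : Type w} [L.Structure M]
variable {P : L.Relations 1} {r : L.Relations 2}

theorem sub_rel (S : L.ElementarySubstructure M) (x : S) :
    Structure.RelMap P ![x] ↔ Structure.RelMap P ![(x : M)] := by
  rw [← S.subtype.map_rel P ![x] ]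
  refine iff_of_eq (congrArg _ ?_)
  ext i
  fin_cases i
  rfl

theorem core [Countable L.Symbols] (F : FullGood P r M)
    (hP : Infinite {x : M // Structure.RelMap P ![x]}) :
    ∃ (N : Type w) (_ : L.Structure N), L.ElementarilyEquivalent N M ∧
      #N = aleph 1 ∧ #{x : N // Structure.RelMap P ![x]} = ℵ₀ := by
  have hMne : Nonempty M := ⟨(Classical.arbitrary {x : M // Structure.RelMap P ![x]}).1⟩
  have hLc : L.card ≤ ℵ₀ := Cardinal.mk_le_aleph0_iff.2 inferInstance
  have G := good_ultra F
  have hPU : Infinite {x : UP M // Structure.RelMap P ![x]} := by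
    refine Infinite.of_injective (fun x : {x : M // Structure.RelMap P ![x]} =>
      (⟨cl (fun _ => x.1), (rel₁_cl _).2 (.of_forall fun _ => x.2)⟩ :
        {x : UP M // Structure.RelMap P ![x]})) ?_
    intro x y hxy
    have := cl_eq.1 (Subtype.ext_iff.1 hxy)
    exact Subtype.ext (by simpa using this)
  obtain ⟨f, hf, hfP⟩ : ∃ f : ℕ → UP M, Function.Injective f ∧
      ∀ n, Structure.RelMap P ![f n] := by
    let g := Infinite.natEmbedding {x : UP M // Structure.RelMap P ![x]}
    exact ⟨fun n => (g n).1, Subtype.val_injective.comp g.injective, fun n => (g n).2⟩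
  have hinf : Infinite (UP M) := Infinite.of_injective f hf
  obtain ⟨N0, hsN0, hN0c⟩ := exists_elementarySubstructure_card_eq L (Set.range f)
    (Cardinal.aleph0 : Cardinal.{w}) le_rfl
    (by
      simp only [Cardinal.lift_id]
      exact Cardinal.mk_le_aleph0_iff.2 (Set.countable_range f).to_subtype) (by simpa using hLc) (by simp)
  have hN0c : (N0 : Set (UP M)).Countable := by
    rw [← Set.countable_coe_iff, ← Cardinal.mk_le_aleph0_iff]
    have : #N0 = ℵ₀ := by simpa using hN0c
    exact this.le
  obtain ⟨N, hN, hN0N, hNc, hNP⟩ := big_sub G N0.meetsDefinable ⟨f 0, hsN0 ⟨0, rfl⟩⟩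
  let E := hN.toElementarySubstructure
  have hE : (E : Set (UP M)) = N := hN.closure_eq_self
  have hEm : ∀ x, x ∈ E ↔ x ∈ N := fun x => by rw [← hE]; rfl
  have hEc : ℵ₀ < #E := by
    by_contra h
    rw [not_lt, Cardinal.mk_le_aleph0_iff] at h
    apply hNc
    rw [← hE]
    exact Set.countable_coe_iff.1 h
  have hPc : {x : E | Structure.RelMap P ![x]}.Countable := by
    refine Set.Countable.mono ?_ (hN0c.preimage (Subtype.val_injective (p := (· ∈ E))))
    intro x hx
    exact hNP x.1 ((hEm _).1 x.2) ((sub_rel E x).1 hx)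
  obtain ⟨S, hsS, hSc⟩ := exists_elementarySubstructure_card_eq L {x : E | Structure.RelMap P ![x]}
    (aleph 1 : Cardinal.{w}) (aleph0_le_aleph 1) (by
      simp only [Cardinal.lift_id]
      exact (Cardinal.mk_le_aleph0_iff.2 hPc.to_subtype).trans (aleph0_le_aleph 1))
    (by
      refine (Cardinal.lift_le_aleph0.2 hLc).trans ?_
      simp) (by
      simp only [Cardinal.lift_id]
      rw [← Cardinal.succ_aleph0]
      exact Order.succ_le_of_lt hEc)
  refine ⟨S, inferInstance, ?_, by simpa using hSc, ?_⟩
  · exact (S.elementarilyEquivalent.trans E.elementarilyEquivalent).trans up_equiv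
  · have h1 : Countable {x : S // Structure.RelMap P ![x]} := by
      have := hPc.to_subtype
      refine Function.Injective.countable (f := fun x : {x : S // Structure.RelMap P ![x]} =>
        (⟨x.1.1, (sub_rel S x.1).1 x.2⟩ : {x : E | Structure.RelMap P ![x]})) ?_
      intro x y hxy
      have hxy : x.1.1 = y.1.1 := by simpa using hxy
      exact Subtype.ext (Subtype.ext hxy)
    have h2 : Infinite {x : S // Structure.RelMap P ![x]} := by
      have hfE : ∀ n, f n ∈ E := fun n => (hEm _).2 (hN0N (hsN0 ⟨n, rfl⟩))
      have hfEP : ∀ n, Structure.RelMap P ![(⟨f n, hfE n⟩ : E)] :=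
        fun n => (sub_rel E _).2 (hfP n)
      refine Infinite.of_injective (fun n : ℕ =>
        (⟨⟨⟨f n, hfE n⟩, hsS (hfEP n)⟩, (sub_rel S _).2 (hfEP n)⟩ :
          {x : S // Structure.RelMap P ![x]})) ?_
      intro m n hmn
      apply hf
      simpa using hmn
    exact Cardinal.mk_eq_aleph0 _

/-- Auxiliary language with one relation symbol in each arity. -/
def LO : FirstOrder.Language.{0, 0} := ⟨fun _ => Empty, fun _ => Unit⟩

/-- Interpretation of the auxiliary language by a binary relation. -/
@[reducible] def loStr (M : Type w) (lt : M → M → Prop) : LO.Structure M where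
  funMap := fun f => Empty.elim f
  RelMap := fun {n} _ x => ∃ a b : Fin n, a.val = 0 ∧ b.val = 1 ∧ lt (x a) (x b)

theorem fullGood_of_card {lam : Cardinal.{w}} (hlam : ℵ₀ ≤ lam)
    (hM : #M = Order.succ lam) (hP : #{x : M // Structure.RelMap P ![x]} = lam)
    (lt : M → M → Prop) [IsWellOrder M lt] (htype : (#M).ord = Ordinal.type lt)
    (hr : ∀ x y : M, Structure.RelMap r ![x, y] ↔ lt x y) : FullGood P r M := by
  have hseg : ∀ z : M, #{x // lt x z} ≤ lam := by
    intro z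
    rw [← Order.lt_succ_iff, ← hM]
    have := Cardinal.card_typein_lt z htype
    rwa [Ordinal.card_typein] at this
  have hseg' : ∀ z : M, #{x // ¬ lt z x} ≤ lam := by
    intro z
    have h1 : {x | ¬ lt z x} ⊆ {x | lt x z} ∪ {z} := by
      intro x hx
      rcases trichotomous_of lt x z with h | h | h
      · exact Or.inl h
      · exact Or.inr h
      · exact absurd h hx
    refine (Cardinal.mk_le_mk_of_subset h1).trans ((Cardinal.mk_union_le _ _).trans ?_)
    refine Cardinal.add_le_of_le hlam (hseg z) ?_
    simpa using (Cardinal.one_le_aleph0.trans hlam)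
  have hsup : ∀ (ι : Type w) (g : ι → M), #ι ≤ lam → ∃ w, ∀ i, lt (g i) w := by
    intro ι g hι
    by_contra hcon
    push Not at hcon
    have h1 : (Set.univ : Set M) ⊆ ⋃ i, {x | ¬ lt (g i) x} := by
      intro x _
      obtain ⟨i, hi⟩ := hcon x
      exact Set.mem_iUnion.2 ⟨i, hi⟩
    have h2 := (Cardinal.mk_le_mk_of_subset h1).trans (Cardinal.mk_iUnion_le_sum_mk)
    have h3 : Cardinal.sum (fun i => #{x | ¬ lt (g i) x}) ≤ #ι * lam := by
      rw [← Cardinal.sum_const']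
      exact Cardinal.sum_le_sum _ _ fun i => hseg' (g i)
    rw [Cardinal.mk_univ, hM] at h2
    have h4 := h2.trans (h3.trans (Cardinal.mul_le_of_le hlam hι le_rfl))
    exact absurd h4 (not_le.2 (Order.lt_succ lam))
  refine ⟨?_, ?_, ?_, ?_, ?_⟩
  · intro R h
    simp only [hr] at h ⊢
    by_contra hcon
    push Not at hcon
    choose! z hz using hcon
    obtain ⟨w, hw⟩ := hsup {x : M // Structure.RelMap P ![x]} (fun y => z y.1) hP.le
    obtain ⟨x, hx, y, hy, hxy⟩ := h w
    exact hz y hy x (trans_of lt (hw ⟨y, hy⟩) hx) hxy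
  · intro S hS
    have wf : WellFounded lt := IsWellFounded.wf
    refine ⟨wf.min S hS, wf.min_mem S hS, fun y hy hne => ?_⟩
    rw [hr]
    rcases trichotomous_of lt y (wf.min S hS) with h | h | h
    · exact absurd h (wf.not_lt_min S hy)
    · exact absurd h hne
    · exact h
  · intro x y h1 h2
    rw [hr] at h1 h2
    exact irrefl_of lt x (trans_of lt h1 h2)
  · intro x y z h1 h2
    rw [hr] at h1 h2 ⊢
    exact trans_of lt h1 h2
  · intro x y
    simp only [hr]
    obtain ⟨w, hw⟩ := hsup (ULift.{w} Bool) (fun b => if b.down then x else y)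
      ((Cardinal.mk_le_aleph0_iff.2 inferInstance).trans hlam)
    exact ⟨w, by simpa using hw ⟨true⟩, by simpa using hw ⟨false⟩⟩

theorem transfer.{a, b, c, w'} {L : FirstOrder.Language.{a, b}} (P : L.Relations 1) (T : L.Theory)
    (N : Type c) [L.Structure N] [hNne : Nonempty N] [N ⊨ T] (hN1 : #N = aleph 1)
    (hNP : #{x : N // Structure.RelMap P ![x]} = ℵ₀) :
    ∃ N : Theory.ModelType.{a, b, w'} T,
      #N = aleph 1 ∧ #{x : N // Structure.RelMap P ![x]} = ℵ₀ := by
  obtain ⟨A, hA⟩ : ∃ A : Type w', #A = aleph 1 := ⟨_, Cardinal.mk_out (aleph 1)⟩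
  have he : Nonempty (N ≃ A) := by
    rw [← Cardinal.lift_mk_eq', hN1, hA]
    simp
  obtain ⟨e⟩ := he
  letI : L.Structure A := e.inducedStructure
  let ee : N ≃[L] A := e.inducedStructureEquiv
  haveI : Nonempty A := e.nonempty_congr.1 hNne
  haveI : A ⊨ T := StrongHomClass.theory_model ee
  refine ⟨Theory.ModelType.of T A, hA, ?_⟩
  have e2 : {x : N // Structure.RelMap P ![x]} ≃ {x : A // Structure.RelMap P ![x]} := by
    refine e.subtypeEquiv fun x => ?_
    rw [← ee.map_rel P ![x] ]
    refine iff_of_eq (congrArg _ ?_)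
    ext i
    fin_cases i
    rfl
  have := Cardinal.lift_mk_eq'.2 ⟨e2⟩
  rw [hNP] at this
  rw [Cardinal.lift_aleph0, eq_comm, Cardinal.lift_eq_aleph0] at this
  exact this

end Core
end VTC
open FirstOrder Language Cardinal

/-- Vaught's two-cardinal theorem `(λ⁺, λ) → (ℵ₁, ℵ₀)`: if a countable theory `T`, in a
language with a unary predicate `P`, has a model of cardinality `λ⁺` in which `P` has
cardinality `λ`, then `T` has a model of cardinality `ℵ₁` in which `P` is countable. -/
theorem vaught_two_cardinal (L : FirstOrder.Language) (hL : Countable L.Symbols)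
    (P : L.Relations 1) (T : L.Theory)
    (lam : Cardinal) (hlam : ℵ₀ ≤ lam)
    (M : T.ModelType)
    (hM : Cardinal.mk M = Order.succ lam)
    (hP : Cardinal.mk {x : M // Structure.RelMap P ![x]} = lam) :
    ∃ N : T.ModelType,
      Cardinal.mk N = Cardinal.aleph 1 ∧
      Cardinal.mk {x : N // Structure.RelMap P ![x]} = ℵ₀ := by
  obtain ⟨lt, hwo, htype⟩ := Cardinal.exists_ord_eq M
  letI : VTC.LO.Structure M := VTC.loStr M lt
  let L' := L.sum VTC.LO
  let r : L'.Relations 2 := Sum.inr ()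
  let P' : L'.Relations 1 := Sum.inl P
  have hcount : Countable L'.Symbols := by
    rw [← Cardinal.mk_le_aleph0_iff]
    change L'.card ≤ ℵ₀
    have h1 : L.card ≤ ℵ₀ := Cardinal.mk_le_aleph0_iff.2 hL
    have h2 : VTC.LO.card ≤ ℵ₀ := Cardinal.mk_le_aleph0_iff.2 (by
      unfold Language.Symbols VTC.LO; infer_instance)
    rw [Language.card_sum]
    exact Cardinal.add_le_aleph0.2 ⟨by simpa using h1, by simpa using h2⟩
  have hr : ∀ x y : M, Structure.RelMap r ![x, y] ↔ lt x y := by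
    intro x y
    constructor
    · rintro ⟨a, b, ha, hb, h⟩
      have ha : a = 0 := Fin.ext ha
      have hb : b = 1 := Fin.ext hb
      subst ha hb
      exact h
    · intro h
      exact ⟨0, 1, rfl, rfl, h⟩
  have F : VTC.FullGood P' r M := VTC.fullGood_of_card (P := P') hlam hM hP lt htype hr
  have hinf : Infinite {x : M // Structure.RelMap P' ![x]} := by
    rw [Cardinal.infinite_iff]
    exact hlam.trans hP.ge
  obtain ⟨N, sN, hNM, hN1, hNP⟩ := VTC.core F hinf
  letI : L.Structure N := (LHom.sumInl : L →ᴸ L').reduct N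
  haveI : (LHom.sumInl : L →ᴸ L').IsExpansionOn N := LHom.isExpansionOn_reduct _ _
  have hT : N ⊨ T := by
    rw [← LHom.onTheory_model (LHom.sumInl : L →ᴸ L')]
    have : M ⊨ (LHom.sumInl : L →ᴸ L').onTheory T :=
      (LHom.onTheory_model (LHom.sumInl : L →ᴸ L') T).2 inferInstance
    exact (hNM.theory_model_iff).2 this
  have hNne : Nonempty N := by
    rw [← Cardinal.mk_ne_zero_iff, hN1]
    exact (Cardinal.aleph_pos 1).ne'
  exact VTC.transfer P T N hN1 hNP
end

section
/- Chang's two-cardinal theorem: let μ be an infinite cardinal with μ = μ^{<μ}, and let T be a first-order theory of cardinality ≤ μ in a language with a unary predicate P. If for some infinite cardinal λ the theory T has a model M with |M| = λ⁺ and |P^M| = λ, then T has a model N with |N| = μ⁺ and |P^N| = μ. -/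
open FirstOrder Language Cardinal

namespace Chang

universe u v w

/-- Recursive definition of an increasing family of tree orders on a well-order. -/
inductive TR {I N : Type u} [LinearOrder I] [LinearOrder N] (e : I → I → N) : N → I → I → Prop
  | base {n : N} {a b : I} (hab : a < b) (he : e b a < n)
      (hc : ∀ a' a'', a' < a'' → a'' < b → e b a' ≤ e b a → e b a'' ≤ e b a → TR e n a' a'') :
      TR e n a b
  | step {n : N} {a b c : I} (hab : a < b) (he : e b a < n)
      (hc : ∀ a' a'', a' < a'' → a'' < b → e b a' ≤ e b a → e b a'' ≤ e b a → TR e n a' a'')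
      (hca : TR e n c a) : TR e n c b

/-- The abstract properties of the tree orders. -/
structure TS (I N : Type u) [LinearOrder I] [LinearOrder N] (mu : Cardinal.{u}) where
  R : N → I → I → Prop
  lt : ∀ {n a b}, R n a b → a < b
  trans : ∀ {n a b c}, R n a b → R n b c → R n a c
  coh : ∀ {n a b c}, R n a c → R n b c → a < b → R n a b
  mono : ∀ {n m a b}, n ≤ m → R n a b → R m a b
  total : ∀ {a b}, a < b → ∃ n, R n a b
  small : ∀ n b, #{a // R n a b} < mu

section TR
variable {I N : Type u} [LinearOrder I] [LinearOrder N] {e : I → I → N}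

theorem TR.iff {n : N} {c b : I} : TR e n c b ↔ ∃ a, a < b ∧ e b a < n ∧
    (∀ a' a'', a' < a'' → a'' < b → e b a' ≤ e b a → e b a'' ≤ e b a → TR e n a' a'') ∧
    (c = a ∨ TR e n c a) := by
  constructor
  · intro h
    cases h with
    | base hab he hc => exact ⟨c, hab, he, hc, Or.inl rfl⟩
    | step hab he hc hca => exact ⟨_, hab, he, hc, Or.inr hca⟩
  · rintro ⟨a, hab, he, hc, rfl | h⟩
    · exact .base hab he hc
    · exact .step hab he hc h

theorem TR.lt {n : N} {a b : I} (h : TR e n a b) : a < b := by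
  induction h with
  | base hab => exact hab
  | step hab _ _ _ _ ih => exact ih.trans hab

theorem TR.mono {n m : N} (hnm : n ≤ m) {a b : I} (h : TR e n a b) : TR e m a b := by
  induction h with
  | base hab he _ ih => exact .base hab (he.trans_le hnm) ih
  | step hab he _ _ ih1 ih2 => exact .step hab (he.trans_le hnm) ih1 ih2

theorem TR.trans {n : N} {a b c : I} (h : TR e n a b) (h2 : TR e n b c) : TR e n a c := by
  induction h2 with
  | base hab he hc _ => exact .step hab he hc h
  | step hab he hc hca _ ih => exact .step hab he hc (ih h)

theorem TR.coh [WellFoundedLT I] {n : N} {a b c : I} (h1 : TR e n a c) (h2 : TR e n b c)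
    (hab : a < b) : TR e n a b := by
  induction c using WellFoundedLT.induction generalizing a b with
  | ind c ih =>
  obtain ⟨x, hx, ex, cx, hax⟩ := TR.iff.1 h1
  obtain ⟨y, hy, ey, cy, hby⟩ := TR.iff.1 h2
  have key : ∃ z < c, (x = z ∨ TR e n x z) ∧ (y = z ∨ TR e n y z) := by
    rcases lt_trichotomy x y with hxy | hxy | hxy
    · refine ⟨y, hy, Or.inr ?_, Or.inl rfl⟩
      rcases le_total (e c x) (e c y) with h | h
      · exact cy _ _ hxy hy h le_rfl
      · exact cx _ _ hxy hy le_rfl h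
    · exact ⟨x, hx, Or.inl rfl, Or.inl hxy.symm⟩
    · refine ⟨x, hx, Or.inl rfl, Or.inr ?_⟩
      rcases le_total (e c x) (e c y) with h | h
      · exact cy _ _ hxy hx le_rfl h
      · exact cx _ _ hxy hx h le_rfl
  obtain ⟨z, hz, hxz, hyz⟩ := key
  have haz : a = z ∨ TR e n a z := by
    rcases hax with rfl | h
    · exact hxz
    · rcases hxz with rfl | h'
      · exact Or.inr h
      · exact Or.inr (h.trans h')
  have hbz : b = z ∨ TR e n b z := by
    rcases hby with rfl | h
    · exact hyz
    · rcases hyz with rfl | h'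
      · exact Or.inr h
      · exact Or.inr (h.trans h')
  rcases hbz with rfl | hbz
  · rcases haz with rfl | haz
    · exact absurd hab (lt_irrefl _)
    · exact haz
  · rcases haz with rfl | haz
    · exact absurd (hab.trans hbz.lt) (lt_irrefl _)
    · exact ih z hz haz hbz hab

theorem TR.small [WellFoundedLT I] {mu : Cardinal.{u}} (hreg : mu.IsRegular)
    (hN : ∀ n : N, #(Set.Iio n) < mu)
    (hinj : ∀ b, Set.InjOn (e b) (Set.Iio b)) (n : N) (b : I) : #{a // TR e n a b} < mu := by
  induction b using WellFoundedLT.induction with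
  | ind b ih =>
  have hsub : {a | TR e n a b} ⊆ ⋃ x, ⋃ (_ : x ∈ {x | x < b ∧ e b x < n}),
      ({x} ∪ {a | TR e n a x}) := by
    intro a ha
    obtain ⟨x, hx, ex, cx, hax⟩ := TR.iff.1 ha
    simp only [Set.mem_iUnion]
    exact ⟨x, ⟨hx, ex⟩, hax⟩
  refine (Cardinal.mk_le_mk_of_subset hsub).trans_lt ?_
  refine (card_biUnion_lt_iff_forall_of_isRegular hreg ?_).2 ?_
  · refine lt_of_le_of_lt ?_ (hN n)
    refine Cardinal.mk_le_of_injective (f := fun x => ⟨e b x.1, x.2.2⟩) ?_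
    intro x y hxy
    exact Subtype.ext (hinj b x.2.1 y.2.1 (congrArg Subtype.val hxy))
  · intro x hx
    refine (Cardinal.mk_union_le _ _).trans_lt ?_
    refine Cardinal.add_lt_of_lt hreg.aleph0_le ?_ (ih x hx.1)
    simpa using hreg.nat_lt 1

theorem TR.total [WellFoundedLT I] {mu : Cardinal.{u}} (hreg : mu.IsRegular)
    (hN : ∀ n : N, #(Set.Iic n) < mu)
    (hcof : ∀ {ι : Type u} (f : ι → N), #ι < mu → ∃ n, ∀ i, f i < n)
    (hinj : ∀ b, Set.InjOn (e b) (Set.Iio b)) {a b : I} (hab : a < b) : ∃ n, TR e n a b := by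
  induction b using WellFoundedLT.induction generalizing a with
  | ind b ih =>
  let S := {x : I // x < b ∧ e b x ≤ e b a}
  have hS : #S < mu := by
    refine lt_of_le_of_lt ?_ (hN (e b a))
    refine Cardinal.mk_le_of_injective (f := fun x => ⟨e b x.1, x.2.2⟩) ?_
    intro x y hxy
    exact Subtype.ext (hinj b x.2.1 y.2.1 (congrArg Subtype.val hxy))
  have h1 : ∀ p : S × S, ∃ n, p.1.1 < p.2.1 → TR e n p.1.1 p.2.1 := by
    intro p
    by_cases h : p.1.1 < p.2.1
    · obtain ⟨n, hn⟩ := ih _ p.2.2.1 h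
      exact ⟨n, fun _ => hn⟩
    · exact ⟨e b a, fun h' => absurd h' h⟩
  choose f hf using h1
  obtain ⟨n, hn⟩ := hcof f (by
    rw [← Cardinal.mul_def]
    exact Cardinal.mul_lt_of_lt hreg.aleph0_le hS hS)
  obtain ⟨n', hn'⟩ := hcof (fun _ : PUnit => e b a) (by simpa using hreg.nat_lt 1)
  refine ⟨max n n', .base hab ((hn' ⟨⟩).trans_le (le_max_right _ _)) ?_⟩
  intro a' a'' h h2 h3 h4
  have := hf (⟨a', h.trans h2, h3⟩, ⟨a'', h2, h4⟩) h
  exact this.mono ((hn _).le.trans (le_max_left _ _))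

end TR

theorem isRegular_of_powerlt {mu : Cardinal.{u}} (hmu : ℵ₀ ≤ mu) (hpow : mu ^< mu = mu) :
    mu.IsRegular := by
  refine ⟨hmu, ?_⟩
  by_contra h
  rw [not_le] at h
  have h1 := Cardinal.le_powerlt mu h
  rw [hpow] at h1
  exact absurd (lt_power_cof_ord hmu) (not_lt.2 h1)

theorem exists_TS {mu : Cardinal.{u}} (hreg : mu.IsRegular) :
    Nonempty (TS (Order.succ mu).ord.ToType mu.ord.ToType mu) := by
  have hinf := hreg.aleph0_le
  have h1 : ∀ b : (Order.succ mu).ord.ToType, ∃ f : (Order.succ mu).ord.ToType → mu.ord.ToType,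
      Set.InjOn f (Set.Iio b) := by
    intro b
    have hb : #(Set.Iio b) ≤ #mu.ord.ToType := by
      rw [mk_ord_toType]
      exact Order.lt_succ_iff.1 (mk_Iio_toType_ord_lt b)
    obtain ⟨g⟩ := hb
    have hne : Nonempty mu.ord.ToType := by
      rw [← Cardinal.mk_ne_zero_iff, mk_ord_toType]
      exact (aleph0_pos.trans_le hinf).ne'
    classical
    refine ⟨fun x => if h : x < b then g ⟨x, h⟩ else Classical.arbitrary _, ?_⟩
    intro x hx y hy hxy
    simp only [Set.mem_Iio] at hx hy
    simp only [hx, hy, dif_pos] at hxy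
    exact congrArg Subtype.val (g.injective hxy)
  choose e he using h1
  have hN : ∀ n : mu.ord.ToType, #(Set.Iio n) < mu := mk_Iio_toType_ord_lt
  have hN' : ∀ n : mu.ord.ToType, #(Set.Iic n) < mu := by
    intro n
    rw [← Set.Iio_union_right]
    refine (Cardinal.mk_union_le _ _).trans_lt ?_
    refine Cardinal.add_lt_of_lt hreg.aleph0_le (hN n) ?_
    simpa using hreg.nat_lt 1
  have hcof : ∀ {ι : Type u} (f : ι → mu.ord.ToType), #ι < mu → ∃ n, ∀ i, f i < n := by
    intro ι f hι
    by_contra hcon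
    push Not at hcon
    have : (Set.univ : Set mu.ord.ToType) ⊆ ⋃ i, Set.Iic (f i) := by
      intro n _
      obtain ⟨i, hi⟩ := hcon n
      exact Set.mem_iUnion.2 ⟨i, hi⟩
    have h2 := (card_iUnion_lt_iff_forall_of_isRegular hreg hι).2 (fun i => hN' (f i))
    have h3 := (Cardinal.mk_le_mk_of_subset this).trans_lt h2
    rw [Cardinal.mk_univ, mk_ord_toType] at h3
    exact lt_irrefl _ h3
  exact ⟨{ R := TR e
           lt := TR.lt
           trans := TR.trans
           coh := TR.coh
           mono := fun h => TR.mono h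
           total := TR.total hreg hN' hcof he
           small := TR.small hreg hN he }⟩

section Sim
variable {I N : Type u} [LinearOrder I] [WellFoundedLT I] [LinearOrder N] {mu : Cardinal.{u}}
  (X : TS I N mu)

/-- The reflexive closure of the tree of predecessors. -/
def TS.D (n : N) (a : I) : Set I := {x | x = a ∨ X.R n x a}

/-- `h` is an isomorphism of the level `n` predecessors of `a` to those of `b`. -/
def TS.Iso (n : N) (a b : I) (h : I → I) : Prop :=
  Set.BijOn h (X.D n a) (X.D n b) ∧
    ∀ m ≤ n, ∀ u ∈ X.D n a, ∀ v ∈ X.D n a, X.R m u v ↔ X.R m (h u) (h v)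

def TS.Sim (n : N) (a b : I) : Prop := ∃ h, X.Iso n a b h

variable {X}

theorem TS.mem_D_self (n : N) (a : I) : a ∈ X.D n a := Or.inl rfl

theorem TS.D_trans {n : N} {a b c : I} (h : a ∈ X.D n b) (h' : b ∈ X.D n c) : a ∈ X.D n c := by
  rcases h with rfl | h
  · exact h'
  · rcases h' with rfl | h'
    · exact Or.inr h
    · exact Or.inr (X.trans h h')

theorem TS.D_mono {m n : N} (hmn : m ≤ n) {a b : I} (h : a ∈ X.D m b) : a ∈ X.D n b :=
  h.imp id (X.mono hmn)

theorem TS.Sim.refl (n : N) (a : I) : X.Sim n a a :=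
  ⟨id, Set.bijOn_id _, fun _ _ _ _ _ _ => Iff.rfl⟩

theorem TS.Sim.symm {n : N} {a b : I} (h : X.Sim n a b) : X.Sim n b a := by
  obtain ⟨h, h1, h2⟩ := h
  have : Nonempty I := ⟨a⟩
  have hinv := h1.invOn_invFunOn
  have hb := h1.symm hinv.symm
  refine ⟨_, hb, ?_⟩
  intro m hm u hu v hv
  rw [h2 m hm _ (hb.mapsTo hu) _ (hb.mapsTo hv), hinv.2 hu, hinv.2 hv]

theorem TS.Sim.trans {n : N} {a b c : I} (h : X.Sim n a b) (h' : X.Sim n b c) : X.Sim n a c := by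
  obtain ⟨h, h1, h2⟩ := h
  obtain ⟨k, k1, k2⟩ := h'
  refine ⟨k ∘ h, k1.comp h1, ?_⟩
  intro m hm u hu v hv
  rw [h2 m hm u hu v hv, k2 m hm _ (h1.mapsTo hu) _ (h1.mapsTo hv)]
  rfl

theorem TS.Iso.apply_self {n : N} {a b : I} {h : I → I} (H : X.Iso n a b h) : h a = b := by
  obtain ⟨h1, h2⟩ := H
  obtain ⟨u, hu, hub⟩ := h1.surjOn (mem_D_self n b)
  rcases hu with rfl | hu
  · exact hub
  · have h3 := (h2 n le_rfl u (Or.inr hu) a (mem_D_self n a)).1 hu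
    rw [hub] at h3
    rcases h1.mapsTo (mem_D_self n a) with h4 | h4
    · exact h4
    · exact absurd ((X.lt h3).trans (X.lt h4)) (lt_irrefl _)

theorem TS.Iso.restrict {m n : N} (hmn : m ≤ n) {a b c : I} {h : I → I} (H : X.Iso n a b h)
    (hc : c ∈ X.D n a) : X.Iso m c (h c) h := by
  obtain ⟨h1, h2⟩ := H
  have hsub : X.D m c ⊆ X.D n a := fun x hx => TS.D_trans (TS.D_mono hmn hx) hc
  refine ⟨⟨?_, h1.injOn.mono hsub, ?_⟩, ?_⟩
  · intro x hx
    rcases hx with rfl | hx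
    · exact mem_D_self _ _
    · exact Or.inr ((h2 m hmn x (hsub (Or.inr hx)) c hc).1 hx)
  · intro y hy
    obtain ⟨x, hx, rfl⟩ := h1.surjOn (TS.D_trans (TS.D_mono hmn hy) (h1.mapsTo hc))
    refine ⟨x, ?_, rfl⟩
    rcases hy with hy | hy
    · exact Or.inl (h1.injOn hx hc hy)
    · exact Or.inr ((h2 m hmn x hx c hc).2 hy)
  · intro k hk u hu v hv
    exact h2 k (hk.trans hmn) u (hsub hu) v (hsub hv)

theorem TS.Sim.mono {m n : N} (hmn : m ≤ n) {a b : I} (h : X.Sim n a b) : X.Sim m a b := by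
  obtain ⟨h, H⟩ := h
  have := H.restrict hmn (mem_D_self n a)
  rw [H.apply_self] at this
  exact ⟨h, this⟩

theorem TS.Sim.transfer {m n : N} (hmn : m ≤ n) {a b c : I} (h : X.Sim n a b) (hc : X.R m c a) :
    ∃ c', X.R m c' b ∧ X.Sim n c c' := by
  obtain ⟨h, H⟩ := h
  have hc' : c ∈ X.D n a := Or.inr (X.mono hmn hc)
  refine ⟨h c, ?_, h, H.restrict le_rfl hc'⟩
  have := (H.2 m hmn c hc' a (mem_D_self n a)).1 hc
  rwa [H.apply_self] at this

instance TS.isWellFounded (n : N) : IsWellFounded I (X.R n) :=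
  ⟨Subrelation.wf (fun h => X.lt h) (wellFounded_lt (α := I))⟩

theorem TS.Sim.rank_le {n : N} {a b : I} (h : X.Sim n a b) :
    IsWellFounded.rank (X.R n) a ≤ IsWellFounded.rank (X.R n) b := by
  induction a using WellFoundedLT.induction generalizing b with
  | ind a ih =>
  rw [IsWellFounded.rank_eq]
  refine Ordinal.iSup_le ?_
  rintro ⟨c, hc⟩
  obtain ⟨c', hc', hs⟩ := h.transfer le_rfl hc
  exact Order.succ_le_of_lt ((ih c (X.lt hc) hs).trans_lt (IsWellFounded.rank_lt_of_rel hc'))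

theorem TS.Sim.rank_eq {n : N} {a b : I} (h : X.Sim n a b) :
    IsWellFounded.rank (X.R n) a = IsWellFounded.rank (X.R n) b :=
  le_antisymm h.rank_le h.symm.rank_le

theorem TS.Sim.uniq {n : N} {a b c : I} (h : X.Sim n a b) (ha : X.R n a c) (hb : X.R n b c) :
    a = b := by
  rcases lt_trichotomy a b with hab | hab | hab
  · exact absurd (IsWellFounded.rank_lt_of_rel (X.coh ha hb hab)) h.rank_eq.not_lt
  · exact hab
  · exact absurd (IsWellFounded.rank_lt_of_rel (X.coh hb ha hab)) h.rank_eq.symm.not_lt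

end Sim

theorem exists_mk_Iio_eq {mu c : Cardinal.{u}} (hc : c < mu) :
    ∃ t : mu.ord.ToType, #(Set.Iio t) = c := by
  have h : c.ord < Ordinal.type (α := mu.ord.ToType) (· < ·) := by
    rw [Ordinal.type_toType]
    exact ord_lt_ord.2 hc
  obtain ⟨t, ht⟩ := Ordinal.typein_surj _ h
  refine ⟨t, ?_⟩
  have := Ordinal.card_typein (r := ((· < ·) : mu.ord.ToType → _ → Prop)) t
  rw [ht, card_ord] at this
  exact this.symm ▸ rfl

/-- The number of types at each level is at most `mu`. -/
theorem exists_cl {mu : Cardinal.{u}} (hmu : ℵ₀ ≤ mu) (hpow : mu ^< mu = mu)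
    {I : Type u} [LinearOrder I] [WellFoundedLT I] (X : TS I mu.ord.ToType mu)
    (n : mu.ord.ToType) : ∃ f : I → mu.ord.ToType, ∀ a b, f a = f b ↔ X.Sim n a b := by
  have hreg := isRegular_of_powerlt hmu hpow
  have hD : ∀ a, #(X.D n a) < mu := by
    intro a
    refine (Cardinal.mk_union_le {a} {x | X.R n x a}).trans_lt ?_
    refine Cardinal.add_lt_of_lt hmu ?_ (X.small n a)
    simpa using hreg.nat_lt 1
  let C := Σ t : mu.ord.ToType, Set (Set.Iio t × Set.Iio t × Set.Iic n)
  have hC : #C ≤ mu := by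
    rw [Cardinal.mk_sigma]
    refine (Cardinal.sum_le_sum _ (fun _ => mu) ?_).trans ?_
    · intro t
      rw [Cardinal.mk_set]
      have h1 : #(Set.Iio t) < mu := by simpa using mk_Iio_lt t
      have h2 : #(Set.Iic n) < mu := by simpa using mk_Iic_lt n (by simp) (by simpa using hmu)
      have h3 : #(Set.Iio t × Set.Iio t × Set.Iic n) < mu := by
        simp only [Cardinal.mk_prod, Cardinal.lift_id]
        exact Cardinal.mul_lt_of_lt hmu h1 (Cardinal.mul_lt_of_lt hmu h1 h2)
      calc (2 : Cardinal) ^ #(Set.Iio t × Set.Iio t × Set.Iic n)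
          ≤ mu ^ #(Set.Iio t × Set.Iio t × Set.Iic n) :=
            Cardinal.power_le_power_right ((hreg.nat_lt 2).le)
        _ ≤ mu ^< mu := Cardinal.le_powerlt mu h3
        _ = mu := hpow
    · simp [Cardinal.mul_eq_self hmu]
  let code : I → C → Prop := fun a c => ∃ j : X.D n a ≃ Set.Iio c.1,
    ∀ (u v : X.D n a) (m : Set.Iic n), X.R m u v ↔ (j u, j v, m) ∈ c.2
  have hex : ∀ a, ∃ c, code a c := by
    intro a
    obtain ⟨t, ht⟩ := exists_mk_Iio_eq (hD a)
    obtain ⟨j⟩ := Cardinal.eq.1 ht.symm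
    refine ⟨⟨t, {p | X.R p.2.2 (j.symm p.1) (j.symm p.2.1)}⟩, j, ?_⟩
    intro u v m
    simp
  have hsim : ∀ a b c, code a c → code b c → X.Sim n a b := by
    rintro a b c ⟨j, hj⟩ ⟨k, hk⟩
    classical
    let h : I → I := fun x => if hx : x ∈ X.D n a then (k.symm (j ⟨x, hx⟩) : I) else x
    have hh : ∀ x (hx : x ∈ X.D n a), h x = (k.symm (j ⟨x, hx⟩) : I) := fun x hx => dif_pos hx
    refine ⟨h, ⟨?_, ?_, ?_⟩, ?_⟩
    · intro x hx
      rw [hh x hx]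
      exact Subtype.coe_prop _
    · intro x hx y hy hxy
      rw [hh x hx, hh y hy] at hxy
      have := j.injective (k.symm.injective (Subtype.ext hxy))
      exact congrArg Subtype.val this
    · intro y hy
      refine ⟨j.symm (k ⟨y, hy⟩), Subtype.coe_prop _, ?_⟩
      rw [hh _ (Subtype.coe_prop _)]
      simp
    · intro m hm u hu v hv
      rw [hh u hu, hh v hv, hj ⟨u, hu⟩ ⟨v, hv⟩ ⟨m, hm⟩]
      have := hk (k.symm (j ⟨u, hu⟩)) (k.symm (j ⟨v, hv⟩)) ⟨m, hm⟩
      simp only [Equiv.apply_symm_apply] at this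
      exact this.symm
  let st : Setoid I := ⟨X.Sim n, fun a => TS.Sim.refl n a, fun h => h.symm, fun h h' => h.trans h'⟩
  choose c hc using hex
  have hQ : #(Quotient st) ≤ #(mu.ord.ToType) := by
    rw [mk_ord_toType]
    refine le_trans ?_ hC
    refine Cardinal.mk_le_of_injective (f := fun q => c q.out) ?_
    intro p q hpq
    have := hsim _ _ _ (hc p.out) (by simp only at hpq; rw [hpq]; exact hc q.out)
    rw [← Quotient.out_eq p, ← Quotient.out_eq q]
    exact Quotient.sound this
  obtain ⟨g⟩ := hQ
  refine ⟨fun a => g (Quotient.mk st a), fun a b => ?_⟩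
  rw [g.injective.eq_iff]
  exact Quotient.eq

section LQ
variable {K D : Type w} (lam : Cardinal.{w})

/-- The quantifier for more than `lam` many. -/
def QL (p : K → Prop) : Prop := lam < #{x // p x}

variable {lam}

theorem QL.mono {p q : K → Prop} (hpq : ∀ x, p x → q x) (h : QL lam p) : QL lam q :=
  lt_of_lt_of_le h (Cardinal.mk_subtype_mono hpq)

theorem QL.exists {p : K → Prop} (h : QL lam p) : ∃ x, p x := by
  by_contra hc
  push Not at hc
  have : IsEmpty {x // p x} := ⟨fun x => hc x.1 x.2⟩
  unfold QL at h
  rw [Cardinal.mk_eq_zero] at h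
  exact absurd h (by simp)

theorem QL.exists_notMem (hlam : ℵ₀ ≤ lam) {p : K → Prop} (h : QL lam p) {s : Set K}
    (hs : s.Finite) : ∃ x, p x ∧ x ∉ s := by
  by_contra hc
  push Not at hc
  have h1 : #{x // p x} ≤ #s := Cardinal.mk_subtype_mono hc
  exact absurd (h1.trans_lt hs.lt_aleph0) (not_lt.2 (hlam.trans h.le))

theorem QL.pigeon (hlam : ℵ₀ ≤ lam) (hD : #D ≤ lam) {p : D → K → Prop}
    (h : QL lam (fun x => ∃ d, p d x)) : ∃ d, QL lam (p d) := by
  by_contra hc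
  push Not at hc
  have h2 : #(⋃ d, {x | p d x} : Set K) ≤ lam := by
    refine (Cardinal.mk_iUnion_le_sum_mk).trans ?_
    refine (Cardinal.sum_le_sum _ (fun _ => lam) (fun d => not_lt.1 (hc d))).trans ?_
    simp only [Cardinal.sum_const, Cardinal.lift_id]
    exact (mul_le_mul_left hD lam).trans (Cardinal.mul_eq_self hlam).le
  have h3 : {x | ∃ d, p d x} = ⋃ d, {x | p d x} := by ext x; simp
  unfold QL at h
  have h4 : #{x // ∃ d, p d x} = #({x | ∃ d, p d x} : Set K) := rfl
  rw [h4, h3] at h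
  exact absurd h (not_lt.2 h2)

variable (lam) in
/-- Iterated quantifier. -/
def LQ (Φ : (ℕ → K) → Prop) : ℕ → ℕ → (ℕ → K) → Prop
  | 0, _, y => Φ y
  | m + 1, i, y => QL lam (fun x => LQ Φ m (i + 1) (Function.update y i x))

theorem LQ.mono {Φ Ψ : (ℕ → K) → Prop} (h : ∀ y, Φ y → Ψ y) {m i : ℕ} {y : ℕ → K}
    (hy : LQ lam Φ m i y) : LQ lam Ψ m i y := by
  induction m generalizing i y with
  | zero => exact h _ hy
  | succ m ih => exact QL.mono (fun x hx => ih hx) hy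

theorem LQ.of_forall (hK : lam < #K) {Φ : (ℕ → K) → Prop} (h : ∀ y, Φ y) (m i : ℕ) (y : ℕ → K) :
    LQ lam Φ m i y := by
  induction m generalizing i y with
  | zero => exact h _
  | succ m ih =>
    have : QL lam (fun _ : K => True) := by
      unfold QL
      rwa [Cardinal.mk_congr (Equiv.subtypeUnivEquiv (fun _ => trivial))]
    exact QL.mono (fun x _ => ih _ _) this

theorem LQ.extend {Φ : (ℕ → K) → Prop} {a b i : ℕ} {y : ℕ → K} (h : LQ lam Φ (a + b) i y) :
    ∃ z, LQ lam Φ b (i + a) z ∧ ∀ t < i, z t = y t := by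
  induction a generalizing i y with
  | zero => exact ⟨y, by simpa using h, fun _ _ => rfl⟩
  | succ a ih =>
    rw [show a + 1 + b = (a + b) + 1 by ring] at h
    obtain ⟨x, hx⟩ := QL.exists h
    obtain ⟨z, hz, hz'⟩ := ih hx
    refine ⟨z, by rwa [show i + (a + 1) = i + 1 + a by ring], fun t ht => ?_⟩
    rw [hz' t (by omega), Function.update_of_ne (by omega)]

theorem LQ.exists {Φ : (ℕ → K) → Prop} {m i : ℕ} {y : ℕ → K} (h : LQ lam Φ m i y) :
    ∃ z, Φ z ∧ ∀ t < i, z t = y t := by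
  obtain ⟨z, hz, hz'⟩ := LQ.extend (a := m) (b := 0) (by simpa using h)
  exact ⟨z, hz, hz'⟩

theorem LQ.exists_inj (hlam : ℵ₀ ≤ lam) {Φ : (ℕ → K) → Prop} {m i : ℕ} {y : ℕ → K}
    (h : LQ lam Φ m i y) (hy : Set.InjOn y (Set.Iio i)) :
    ∃ z, Φ z ∧ Set.InjOn z (Set.Iio (i + m)) := by
  induction m generalizing i y with
  | zero => exact ⟨y, h, by simpa using hy⟩
  | succ m ih =>
    obtain ⟨x, hx, hxn⟩ := QL.exists_notMem hlam h ((Set.finite_Iio i).image y)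
    have := ih hx ?_
    · rwa [show i + 1 + m = i + (m + 1) by ring] at this
    · intro s hs t ht hst
      simp only [Set.mem_Iio] at hs ht
      by_cases h1 : s = i
      · by_cases h2 : t = i
        · omega
        · subst h1
          rw [Function.update_self, Function.update_of_ne h2] at hst
          exact absurd ⟨t, by simp; omega, hst.symm⟩ hxn
      · by_cases h2 : t = i
        · subst h2
          rw [Function.update_self, Function.update_of_ne h1] at hst
          exact absurd ⟨s, by simp; omega, hst⟩ hxn
        · rw [Function.update_of_ne h1, Function.update_of_ne h2] at hst
          exact hy (by simp; omega) (by simp; omega) hst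

theorem LQ.pigeon (hlam : ℵ₀ ≤ lam) (hD : #D ≤ lam) {p : D → (ℕ → K) → Prop} {m i : ℕ} {y : ℕ → K}
    (h : LQ lam (fun y => ∃ d, p d y) m i y) : ∃ d, LQ lam (p d) m i y := by
  induction m generalizing i y with
  | zero => exact h
  | succ m ih => exact QL.pigeon hlam hD (QL.mono (fun x hx => ih hx) h)

theorem LQ.pigeon_finset (hlam : ℵ₀ ≤ lam) (hD : #D ≤ lam) (g : List K → D)
    {Φ : (ℕ → K) → Prop} {m i : ℕ} {y : ℕ → K} (h : LQ lam Φ m i y) (F : Finset (List ℕ)) :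
    ∃ d : List ℕ → D, LQ lam (fun y => Φ y ∧ ∀ l ∈ F, g (l.map y) = d l) m i y := by
  classical
  induction F using Finset.induction_on with
  | empty => exact ⟨fun _ => g [], LQ.mono (fun y hy => ⟨hy, by simp⟩) h⟩
  | insert a F ha ih =>
    obtain ⟨d, hd⟩ := ih
    obtain ⟨c, hc⟩ := LQ.pigeon (D := D)
      (p := fun c y => (Φ y ∧ ∀ l ∈ F, g (l.map y) = d l) ∧ g (a.map y) = c) hlam hD
      (LQ.mono (fun y hy => ⟨_, hy, rfl⟩) hd)
    refine ⟨Function.update d a c, LQ.mono (fun y hy => ⟨hy.1.1, ?_⟩) hc⟩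
    intro l hl
    rcases Finset.mem_insert.1 hl with rfl | hl
    · rw [Function.update_self]
      exact hy.2
    · rw [Function.update_of_ne (show l ≠ a from fun e => ha (e ▸ hl))]
      exact hy.1.2 l hl

/-- Rearranging a quantifier prefix along a tree. -/
theorem LQ.tree {Φ : (ℕ → K) → Prop} {k : ℕ} {y0 : ℕ → K} (h : LQ lam Φ k 0 y0)
    (l : ℕ) (ϖ : ℕ → ℕ) (r : ℕ → ℕ → Prop) (hr : ∀ i j, r i j → i < j)
    (hϖ : ∀ i j, j < l → r i j → ϖ i < ϖ j) (hk : ∀ j < l, ϖ j < k)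
    (hcomp : ∀ i j t, t < l → r i t → r j t → i < j → r i j) (x0 : ℕ → K) :
    LQ lam (fun x => ∀ j < l, ∃ y, Φ y ∧ ∀ i, (i = j ∨ r i j) → y (ϖ i) = x i) l 0 x0 := by
  let Inv : ℕ → (ℕ → K) → Prop := fun s x => ∀ j < s, ∃ y, LQ lam Φ (k - (ϖ j + 1)) (ϖ j + 1) y ∧
    ∀ i, (i = j ∨ r i j) → y (ϖ i) = x i
  have step : ∀ s < l, ∀ x, Inv s x → QL lam (fun z => Inv (s + 1) (Function.update x s z)) := by
    intro s hs x hx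
    have key : ∃ y, LQ lam Φ (k - ϖ s) (ϖ s) y ∧ ∀ i, r i s → y (ϖ i) = x i := by
      by_cases hp : ∃ i, r i s
      · have hfin : {i | r i s}.Finite := (Set.finite_Iio s).subset (fun i hi => hr i s hi)
        obtain ⟨i, hi, hmax⟩ := Set.exists_max_image {i | r i s} id hfin hp
        obtain ⟨y, hy, hy'⟩ := hx i (hr i s hi)
        have h1 := hϖ i s hs hi
        have h2 := hk s hs
        rw [show k - (ϖ i + 1) = (ϖ s - (ϖ i + 1)) + (k - ϖ s) by omega] at hy
        obtain ⟨z, hz, hz'⟩ := LQ.extend hy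
        refine ⟨z, by rwa [show ϖ i + 1 + (ϖ s - (ϖ i + 1)) = ϖ s by omega] at hz, ?_⟩
        intro t ht
        rcases (hmax t ht).lt_or_eq with hlt | heq
        · have hti := hcomp t i s hs ht hi hlt
          have h3 := hϖ t i ((hr i s hi).trans hs) hti
          rw [hz' _ (by omega), hy' t (Or.inr hti)]
        · simp only [id] at heq
          subst heq
          rw [hz' _ (by omega), hy' t (Or.inl rfl)]
      · have h2 := hk s hs
        rw [show k = ϖ s + (k - ϖ s) by omega] at h
        obtain ⟨z, hz, hz'⟩ := LQ.extend h
        exact ⟨z, by simpa using hz, fun i hi => absurd ⟨i, hi⟩ hp⟩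
    obtain ⟨y, hy, hy'⟩ := key
    have h2 := hk s hs
    rw [show k - ϖ s = (k - (ϖ s + 1)) + 1 by omega] at hy
    refine QL.mono ?_ hy
    intro z hz j hj
    by_cases hjs : j = s
    · subst hjs
      refine ⟨_, hz, ?_⟩
      rintro i (rfl | hi)
      · simp
      · have h3 := hϖ i j hs hi
        have h4 := hr i j hi
        rw [Function.update_of_ne (by omega), Function.update_of_ne (by omega), hy' i hi]
    · obtain ⟨u, hu, hu'⟩ := hx j (by omega)
      refine ⟨u, hu, fun i hi => ?_⟩
      have : i ≤ j := by
        rcases hi with rfl | hi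
        · exact le_rfl
        · exact (hr i j hi).le
      rw [Function.update_of_ne (by omega), hu' i hi]
  have main : ∀ m s x, s + m = l → Inv s x →
      LQ lam (fun x => ∀ j < l, ∃ y, Φ y ∧ ∀ i, (i = j ∨ r i j) → y (ϖ i) = x i) m s x := by
    intro m
    induction m with
    | zero =>
      intro s x hs hx j hj
      obtain ⟨y, hy, hy'⟩ := hx j (by omega)
      obtain ⟨z, hz, hz'⟩ := LQ.exists hy
      refine ⟨z, hz, fun i hi => ?_⟩
      have : ϖ i ≤ ϖ j := by
        rcases hi with rfl | hi
        · exact le_rfl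
        · exact (hϖ i j hj hi).le
      rw [hz' _ (by omega), hy' i hi]
    | succ m ih =>
      intro s x hs hx
      exact QL.mono (fun z hz => ih (s + 1) _ (by omega) hz) (step s (by omega) x hx)
  exact main l 0 x0 (by omega) (fun j hj => absurd hj (by omega))

end LQ

section Claim
variable {I N : Type u} [LinearOrder I] [WellFoundedLT I] [LinearOrder N] [WellFoundedLT N]
  {mu : Cardinal.{u}} {X : TS I N mu}

/-- The elements of `I` which look like an element of `S` at level `n`. -/
def TS.Hat (X : TS I N mu) (n : N) (S : Finset I) : Set I := {a | ∃ s ∈ S, X.Sim n a s}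

theorem TS.Hat_sim {n : N} {S : Finset I} {a b : I} (h : X.Sim n a b) (hb : b ∈ X.Hat n S) :
    a ∈ X.Hat n S := by
  obtain ⟨s, hs, h'⟩ := hb
  exact ⟨s, hs, h.trans h'⟩

theorem TS.Hat_mono {m n : N} (hmn : m ≤ n) {S : Finset I} {a : I} (h : a ∈ X.Hat n S) :
    a ∈ X.Hat m S := by
  obtain ⟨s, hs, h'⟩ := h
  exact ⟨s, hs, h'.mono hmn⟩

theorem TS.mem_Hat {n : N} {S : Finset I} {s : I} (hs : s ∈ S) : s ∈ X.Hat n S :=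
  ⟨s, hs, TS.Sim.refl n s⟩

/-- Index functions. -/
structure TS.IsIdx (X : TS I N mu) (n : N) (S : Finset I) (k : ℕ) (π : I → ℕ) : Prop where
  lt : ∀ a ∈ X.Hat n S, π a < k
  sim : ∀ a b, X.Sim n a b → π a = π b
  inj : ∀ a ∈ X.Hat n S, ∀ b ∈ X.Hat n S, π a = π b → X.Sim n a b
  mono : ∀ a ∈ X.Hat n S, ∀ b ∈ X.Hat n S, X.R n a b → π a < π b

theorem TS.exists_idx (n : N) (cl : I → N) (hcl : ∀ a b, cl a = cl b ↔ X.Sim n a b)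
    (S : Finset I) : ∃ k π, X.IsIdx n S k π := by
  classical
  let key : I → Ordinal.{u} ×ₗ N := fun a => toLex (IsWellFounded.rank (X.R n) a, cl a)
  have hkey : ∀ a b, key a = key b ↔ X.Sim n a b := by
    intro a b
    constructor
    · intro h
      have := congrArg (fun z => (ofLex z).2) h
      exact (hcl a b).1 this
    · intro h
      simp only [key]
      rw [h.rank_eq, (hcl a b).2 h]
  have hmem : ∀ a ∈ X.Hat n S, key a ∈ S.image key := by
    rintro a ⟨s, hs, h⟩
    rw [(hkey a s).2 h]
    exact Finset.mem_image_of_mem _ hs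
  let π : I → ℕ := fun a => ((S.image key).filter (· < key a)).card
  have hlt : ∀ a b, a ∈ X.Hat n S → key a < key b → π a < π b := by
    intro a b ha hab
    refine Finset.card_lt_card ?_
    refine ⟨fun t ht => ?_, fun hsub => ?_⟩
    · rw [Finset.mem_filter] at ht ⊢
      exact ⟨ht.1, ht.2.trans hab⟩
    · have := hsub (Finset.mem_filter.2 ⟨hmem a ha, hab⟩)
      exact absurd (Finset.mem_filter.1 this).2 (lt_irrefl _)
  refine ⟨(S.image key).card, π, ?_, ?_, ?_, ?_⟩
  · intro a ha
    refine Finset.card_lt_card ⟨Finset.filter_subset _ _, fun hsub => ?_⟩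
    exact absurd (Finset.mem_filter.1 (hsub (hmem a ha))).2 (lt_irrefl _)
  · intro a b h
    simp only [π]
    rw [(hkey a b).2 h]
  · intro a ha b hb h
    rw [← hkey]
    rcases lt_trichotomy (key a) (key b) with h1 | h1 | h1
    · exact absurd h (hlt a b ha h1).ne
    · exact h1
    · exact absurd h (hlt b a hb h1).ne'
  · intro a ha b hb h
    refine hlt a b ha ?_
    rw [Prod.Lex.lt_iff]
    exact Or.inl (IsWellFounded.rank_lt_of_rel h)

open Classical in
/-- The level of a chain. -/
noncomputable def TS.lev [Nonempty N] (X : TS I N mu) (w : List I) : N :=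
  if h : ({n | w.Pairwise (X.R n)} : Set N).Nonempty then WellFounded.min wellFounded_lt _ h
  else Classical.arbitrary N

theorem TS.lev_spec [Nonempty N] {n : N} {w : List I} (h : w.Pairwise (X.R n)) :
    w.Pairwise (X.R (X.lev w)) ∧ X.lev w ≤ n := by
  have hne : ({n | w.Pairwise (X.R n)} : Set N).Nonempty := ⟨n, h⟩
  have h1 : X.lev w = WellFounded.min wellFounded_lt _ hne := dif_pos hne
  rw [h1]
  exact ⟨WellFounded.min_mem wellFounded_lt _ hne, not_lt.1 (WellFounded.not_lt_min wellFounded_lt {n | w.Pairwise (X.R n)} h)⟩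

/-- The color of a chain. -/
noncomputable def TS.col [Nonempty N] (X : TS I N mu) (cl : N → I → N) (w : List I) :
    N × List N := (X.lev w, w.map (cl (X.lev w)))

/-- The induction claim. -/
def TS.Claim [Nonempty N] (X : TS I N mu) (cl : N → I → N) {K D : Type w} (lam : Cardinal.{w})
    (g : List K → D) (n : N) : Prop :=
  ∀ (S : Finset I) (y0 : ℕ → K), ∃ k π, X.IsIdx n S k π ∧ ∃ p : N × List N → D,
    LQ lam (fun y => ∀ w : List I, w ≠ [] → w.Pairwise (X.R n) → (∀ a ∈ w, a ∈ X.Hat n S) →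
      g (w.map (y ∘ π)) = p (X.col cl w)) k 0 y0

variable [Nonempty N] {cl : N → I → N} {K D : Type w} {lam : Cardinal.{w}} {g : List K → D}

theorem TS.IsIdx.map_sorted {n : N} {S : Finset I} {k : ℕ} {π : I → ℕ} (hπ : X.IsIdx n S k π)
    {w : List I} (hw : w.Pairwise (X.R n)) (hS : ∀ a ∈ w, a ∈ X.Hat n S) :
    (w.map π).Pairwise (· < ·) := by
  rw [List.pairwise_map]
  exact hw.imp_of_mem (fun ha hb h => hπ.mono _ (hS _ ha) _ (hS _ hb) h)

theorem TS.IsIdx.mem_lists {n : N} {S : Finset I} {k : ℕ} {π : I → ℕ} (hπ : X.IsIdx n S k π)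
    {w : List I} (hw : w.Pairwise (X.R n)) (hS : ∀ a ∈ w, a ∈ X.Hat n S) :
    w.map π ∈ (Finset.range k).powerset.image (fun F => F.sort (· ≤ ·)) := by
  rw [Finset.mem_image]
  have h := hπ.map_sorted hw hS
  refine ⟨(w.map π).toFinset, ?_, ?_⟩
  · rw [Finset.mem_powerset]
    intro t ht
    rw [List.mem_toFinset, List.mem_map] at ht
    obtain ⟨a, ha, rfl⟩ := ht
    exact Finset.mem_range.2 (hπ.lt a (hS a ha))
  · exact (List.toFinset_sort (· ≤ ·) (h.imp (fun h => h.ne))).2 (h.imp (fun h => h.le))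

theorem TS.claim_finish (hlam : ℵ₀ ≤ lam) (hD : #D ≤ lam)
    (hcl : ∀ n a b, cl n a = cl n b ↔ X.Sim n a b) {n : N}
    {S : Finset I} {y0 : ℕ → K} {k : ℕ} {π : I → ℕ} (hπ : X.IsIdx n S k π)
    {Φ : (ℕ → K) → Prop} (h : LQ lam Φ k 0 y0) (p' : N × List N → D)
    (hΦ : ∀ y, Φ y → ∀ w : List I, w ≠ [] → w.Pairwise (X.R n) → (∀ a ∈ w, a ∈ X.Hat n S) →
      X.lev w ≠ n → g (w.map (y ∘ π)) = p' (X.col cl w)) :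
    ∃ p : N × List N → D,
    LQ lam (fun y => ∀ w : List I, w ≠ [] → w.Pairwise (X.R n) → (∀ a ∈ w, a ∈ X.Hat n S) →
      g (w.map (y ∘ π)) = p (X.col cl w)) k 0 y0 := by
  classical
  obtain ⟨d, hd⟩ := LQ.pigeon_finset hlam hD g h
    ((Finset.range k).powerset.image (fun F => F.sort (· ≤ ·)))
  let E : N × List N → Prop := fun c => ∃ w : List I, w.map (cl n) = c.2
  let p : N × List N → D := fun c => if c.1 = n then
    if hc : E c then d (hc.choose.map π) else d [] else p' c
  refine ⟨p, LQ.mono ?_ hd⟩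
  rintro y ⟨hy, hyd⟩ w hw0 hw hwS
  by_cases hl : X.lev w = n
  · have h1 : E (X.col cl w) := ⟨w, by simp [TS.col, hl]⟩
    have h2 : p (X.col cl w) = d (h1.choose.map π) := by
      simp only [p]
      rw [if_pos (by exact hl), dif_pos h1]
    have h3 : h1.choose.map π = w.map π := by
      have h4 : h1.choose.map (cl n) = w.map (cl n) := by
        rw [h1.choose_spec]
        simp [TS.col, hl]
      have h5 : ∀ u v : List I, u.map (cl n) = v.map (cl n) → u.map π = v.map π := by
        intro u
        induction u with
        | nil =>
          intro v hv
          simp at hv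
          simp [hv]
        | cons a u ih =>
          intro v hv
          cases v with
          | nil => simp at hv
          | cons b v =>
            simp only [List.map_cons, List.cons.injEq] at hv ⊢
            exact ⟨hπ.sim _ _ ((hcl n a b).1 hv.1), ih v hv.2⟩
      exact h5 _ _ h4
    rw [h2, h3, ← hyd _ (hπ.mem_lists hw hwS), List.map_map]
  · have h2 : p (X.col cl w) = p' (X.col cl w) := by
      simp only [p]
      rw [if_neg (by exact hl)]
    rw [h2]
    exact hΦ y hy w hw0 hw hwS hl

theorem TS.exists_lower {n : N} (hn : ¬ IsMin n) (S : Finset I) :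
    ∃ n' < n, ∀ a ∈ X.Hat n S, ∀ b ∈ X.Hat n S, ∀ m < n, X.R m a b → X.R n' a b := by
  classical
  obtain ⟨m0, hm0⟩ := not_isMin_iff.1 hn
  let E : I × I → Prop := fun q => ∃ m, m < n ∧ ∃ a, X.Sim n a q.1 ∧ X.R m a q.2
  let μ : I × I → N := fun q => if h : E q then h.choose else m0
  have hμ : ∀ q, μ q < n := by
    intro q
    by_cases h : E q
    · simp only [μ, dif_pos h]
      exact h.choose_spec.1
    · simp only [μ, dif_neg h]
      exact hm0
  let T := insert m0 ((S ×ˢ S).image μ)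
  have hT : T.Nonempty := Finset.insert_nonempty _ _
  refine ⟨T.max' hT, ?_, ?_⟩
  · rw [Finset.max'_lt_iff]
    intro t ht
    rcases Finset.mem_insert.1 ht with rfl | ht
    · exact hm0
    · obtain ⟨q, _, rfl⟩ := Finset.mem_image.1 ht
      exact hμ q
  have hlt : T.max' hT < n := by
    rw [Finset.max'_lt_iff]
    intro t ht
    rcases Finset.mem_insert.1 ht with rfl | ht
    · exact hm0
    · obtain ⟨q, _, rfl⟩ := Finset.mem_image.1 ht
      exact hμ q
  · intro a ha b hb m hm hab
    obtain ⟨t, ht, hbt⟩ := hb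
    obtain ⟨a', ha', haa'⟩ := hbt.transfer hm.le hab
    obtain ⟨s, hs, has⟩ := ha
    have hE : E (s, t) := ⟨m, hm, a', haa'.symm.trans has, ha'⟩
    obtain ⟨h1, a0, h2, h3⟩ := hE.choose_spec
    have hμq : μ (s, t) = hE.choose := dif_pos hE
    have h4 : a0 = a' := (h2.trans (has.symm.trans haa')).uniq (X.mono h1.le h3) (X.mono hm.le ha')
    subst h4
    have h5 : X.R (T.max' hT) a0 t := by
      refine X.mono ?_ h3
      rw [← hμq]
      refine Finset.le_max' _ _ (Finset.mem_insert_of_mem (Finset.mem_image_of_mem _ ?_))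
      exact Finset.mem_product.2 ⟨hs, ht⟩
    obtain ⟨a'', h6, h7⟩ := hbt.symm.transfer hlt.le h5
    have h8 : a = a'' := (haa'.trans h7).uniq (X.mono hm.le hab) (X.mono hlt.le h6)
    rwa [h8]

theorem TS.claim (hlam : ℵ₀ ≤ lam) (hK : lam < #K) (hD : #D ≤ lam)
    (hcl : ∀ n a b, cl n a = cl n b ↔ X.Sim n a b) (n : N) : X.Claim cl lam g n := by
  classical
  induction n using WellFoundedLT.induction with
  | ind n ih =>
  intro S y0
  obtain ⟨k, π, hπ⟩ := TS.exists_idx (X := X) n (cl n) (hcl n) S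
  refine ⟨k, π, hπ, ?_⟩
  by_cases hn : IsMin n
  · refine claim_finish hlam hD hcl hπ (LQ.of_forall (Φ := fun _ => True) hK (fun _ => trivial) _ _ _)
      (fun _ => g []) ?_
    intro y _ w _ hw _ hl
    exact absurd (le_antisymm (TS.lev_spec hw).2 (hn (TS.lev_spec hw).2)) hl
  obtain ⟨n', hn', hlow⟩ := TS.exists_lower (X := X) hn S
  obtain ⟨k', π', hπ', p', hp'⟩ := ih n' hn' S y0
  rcases S.eq_empty_or_nonempty with rfl | ⟨s0, hs0⟩
  · refine claim_finish hlam hD hcl hπ (LQ.of_forall (Φ := fun _ => True) hK (fun _ => trivial) _ _ _)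
      (fun _ => g []) ?_
    intro y _ w hw0 hw hwS hl
    obtain ⟨a, ha⟩ := List.exists_mem_of_ne_nil w hw0
    obtain ⟨s, hs, _⟩ := hwS a ha
    simp at hs
  have hrep : ∀ j, ∃ s ∈ X.Hat n S, (∀ a ∈ X.Hat n S, π a = j → π s = j) := by
    intro j
    by_cases h : ∃ a ∈ X.Hat n S, π a = j
    · obtain ⟨a, ha, hj⟩ := h
      exact ⟨a, ha, fun _ _ _ => hj⟩
    · exact ⟨s0, TS.mem_Hat hs0, fun a ha hj => absurd ⟨a, ha, hj⟩ h⟩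
  choose s hs hsj using hrep
  have hsim : ∀ a ∈ X.Hat n S, X.Sim n a (s (π a)) := fun a ha =>
    hπ.inj a ha _ (hs _) (hsj _ a ha rfl).symm
  let r : ℕ → ℕ → Prop := fun i j => π (s j) = j ∧ ∃ a ∈ X.Hat n S, X.R n' a (s j) ∧ π a = i
  have hr : ∀ i j, r i j → i < j := by
    rintro i j ⟨hj, a, ha, haj, rfl⟩
    have := hπ.mono a ha _ (hs j) (X.mono hn'.le haj)
    rwa [hj] at this
  have hϖ' : ∀ a ∈ X.Hat n S, π' (s (π a)) = π' a := fun a ha =>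
    hπ'.sim _ _ ((hsim a ha).symm.mono hn'.le)
  have hr' : ∀ a ∈ X.Hat n S, ∀ b ∈ X.Hat n S, X.R n' a b → r (π a) (π b) := by
    intro a ha b hb hab
    refine ⟨hsj _ b hb rfl, ?_⟩
    obtain ⟨a', ha', haa'⟩ := (hsim b hb).transfer hn'.le hab
    exact ⟨a', TS.Hat_sim haa'.symm ha, ha', (hπ.sim _ _ haa').symm⟩
  have htree := LQ.tree hp' k (fun j => π' (s j)) r hr ?_ ?_ ?_ y0
  · refine claim_finish hlam hD hcl hπ htree p' ?_
    intro x hx w hw0 hw hwS hl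
    have hlt : X.lev w < n := lt_of_le_of_ne (TS.lev_spec hw).2 hl
    have hw' : w.Pairwise (X.R n') := (TS.lev_spec hw).1.imp_of_mem
      (fun ha hb h => hlow _ (hwS _ ha) _ (hwS _ hb) _ hlt h)
    have hlast := List.getLast_mem hw0
    obtain ⟨y, hy, hyx⟩ := hx (π (w.getLast hw0)) (hπ.lt _ (hwS _ hlast))
    rw [← hy w hw0 hw' (fun a ha => TS.Hat_mono hn'.le (hwS a ha))]
    congr 1
    refine List.map_congr_left ?_
    intro a ha
    simp only [Function.comp]
    rw [← hϖ' a (hwS a ha)]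
    refine (hyx (π a) ?_).symm
    by_cases hal : a = w.getLast hw0
    · exact Or.inl (by rw [← hal])
    · refine Or.inr (hr' _ (hwS a ha) _ (hwS _ hlast) ?_)
      rw [← List.dropLast_append_getLast hw0, List.pairwise_append] at hw'
      refine hw'.2.2 a ?_ _ (by simp)
      have := ha
      rw [← List.dropLast_append_getLast hw0, List.mem_append] at this
      rcases this with h | h
      · exact h
      · exact absurd (by simpa using h) hal
  · rintro i j hj ⟨hj', a, ha, haj, rfl⟩
    rw [hϖ' a ha]
    exact hπ'.mono _ (TS.Hat_mono hn'.le ha) _ (TS.Hat_mono hn'.le (hs j)) haj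
  · intro j hj
    exact hπ'.lt _ (TS.Hat_mono hn'.le (hs j))
  · rintro i j t ht ⟨ht', a, ha, hat, rfl⟩ ⟨_, b, hb, hbt, rfl⟩ hab
    refine hr' a ha b hb (X.coh hat hbt ?_)
    rcases lt_trichotomy a b with h | h | h
    · exact h
    · subst h
      exact absurd hab (lt_irrefl _)
    · exact absurd (hπ.mono b hb a ha (X.mono hn'.le (X.coh hbt hat h))) (by omega)

/-- Realization of finite patterns. -/
theorem TS.realize (hlam : ℵ₀ ≤ lam) (hK : lam < #K) (hD : #D ≤ lam)
    (hcl : ∀ n a b, cl n a = cl n b ↔ X.Sim n a b) (g : List K → D) (W : Finset I) :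
    ∃ x : I → K, Set.InjOn x W ∧ ∀ w w' : List I, w.Pairwise (· < ·) → w'.Pairwise (· < ·) →
      (∀ a ∈ w, a ∈ W) → (∀ a ∈ w', a ∈ W) → X.col cl w = X.col cl w' →
      g (w.map x) = g (w'.map x) := by
  classical
  have hn : ∃ n, ∀ a ∈ W, ∀ b ∈ W, a < b → X.R n a b := by
    let ν : I × I → N := fun q => if h : q.1 < q.2 then (X.total h).choose else Classical.arbitrary N
    obtain ⟨n, hn⟩ := ((W ×ˢ W).image ν).exists_le
    refine ⟨n, fun a ha b hb hab => ?_⟩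
    have h1 := hn (ν (a, b)) (Finset.mem_image_of_mem _ (Finset.mem_product.2 ⟨ha, hb⟩))
    have h2 : ν (a, b) = (X.total hab).choose := dif_pos hab
    rw [h2] at h1
    exact X.mono h1 (X.total hab).choose_spec
  obtain ⟨n, hn⟩ := hn
  have : Nonempty K := by
    rw [← Cardinal.mk_ne_zero_iff]
    exact (lt_of_le_of_lt zero_le hK).ne'
  obtain ⟨k, π, hπ, p, hp⟩ := TS.claim (g := g) hlam hK hD hcl n W (fun _ => Classical.arbitrary K)
  obtain ⟨y, hy, hinj⟩ := LQ.exists_inj hlam hp (by intro a ha; simp at ha)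
  have hπW : Set.InjOn π W := by
    intro a ha b hb hab
    rcases lt_trichotomy a b with h | h | h
    · exact absurd hab (hπ.mono _ (TS.mem_Hat ha) _ (TS.mem_Hat hb) (hn a ha b hb h)).ne
    · exact h
    · exact absurd hab (hπ.mono _ (TS.mem_Hat hb) _ (TS.mem_Hat ha) (hn b hb a ha h)).ne'
  refine ⟨y ∘ π, hinj.comp hπW ?_, ?_⟩
  · intro a ha
    simpa using hπ.lt a (TS.mem_Hat ha)
  have hval : ∀ w : List I, w.Pairwise (· < ·) → (∀ a ∈ w, a ∈ W) → w ≠ [] →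
      g (w.map (y ∘ π)) = p (X.col cl w) := by
    intro w hw hW hw0
    refine hy w hw0 (hw.imp_of_mem (fun ha hb h => hn _ (hW _ ha) _ (hW _ hb) h)) ?_
    exact fun a ha => TS.mem_Hat (hW a ha)
  intro w w' hw hw' hW hW' hc
  have hlen : w.length = w'.length := by
    have := congrArg (fun c => c.2.length) hc
    simpa [TS.col] using this
  by_cases h0 : w = []
  · subst h0
    have : w' = [] := by simpa using hlen.symm
    rw [this]
  · have h0' : w' ≠ [] := by
      rintro rfl
      simp at hlen
      exact h0 hlen
    rw [hval w hw hW h0, hval w' hw' hW' h0', hc]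

end Claim

section Hull
universe a b
open FirstOrder.Language.Structure

/-- The Skolem hull in an ultrapower. -/
theorem exists_hull (L : FirstOrder.Language.{a, b}) {M : Type w} [Nonempty M] [L.Structure M]
    {J V : Type (max a b)} (U : Ultrafilter J) (val : J → V → M) :
    ∃ (N : Type (max a b)) (_ : L.Structure N) (σ : (L.sum L.skolem₁).Term V → N),
      Function.Surjective σ ∧
      (∀ t t', σ t = σ t' ↔ ∀ᶠ j in (U : Filter J), t.realize (val j) = t'.realize (val j)) ∧
      (∀ {n : ℕ} (r : L.Relations n) (ts : Fin n → (L.sum L.skolem₁).Term V),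
        RelMap r (fun i => σ (ts i)) ↔
          ∀ᶠ j in (U : Filter J), RelMap r (fun i => (ts i).realize (val j))) ∧
      (M ≅[L] N) := by
  let Mst := (U : Filter J).Product (fun _ => M)
  let q : (J → M) → Mst := fun f => (f : (U : Filter J).Product (fun _ => M))
  let τ : (L.sum L.skolem₁).Term V → Mst := fun t => q (fun j => t.realize (val j))
  have hq : ∀ f g, q f = q g ↔ ∀ᶠ j in (U : Filter J), f j = g j := fun f g => Quotient.eq''
  let S : L.Substructure Mst :=
    { carrier := Set.range τ
      fun_mem := by
        intro n f x hx
        choose ts hts using hx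
        refine ⟨Term.func (Sum.inl f : (L.sum L.skolem₁).Functions n) ts, ?_⟩
        have : x = fun i => q (fun j => (ts i).realize (val j)) := funext (fun i => (hts i).symm)
        rw [this]
        exact (Ultraproduct.funMap_cast f (fun i j => (ts i).realize (val j))).symm }
  have hS : S.IsElementary := by
    apply S.isElementary_of_exists
    intro n φ x y hφ
    have hx : ∀ i, ∃ t, τ t = x i := fun i => (x i).2
    choose ts hts using hx
    obtain ⟨y, rfl⟩ : ∃ f, q f = y := Quotient.exists_rep y
    have hsn : ∀ f : J → M, (Fin.snoc (Subtype.val ∘ x) (q f) : Fin (n + 1) → Mst) =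
        fun i => q ((Fin.snoc (fun i j => (ts i).realize (val j)) f : Fin (n + 1) → J → M) i) := by
      intro f
      funext i
      refine Fin.lastCases ?_ (fun i => ?_) i
      · simp
      · simp only [Fin.snoc_castSucc, Function.comp]
        exact (hts i).symm
    have hsn' : ∀ (f : J → M) j, (fun i =>
        (Fin.snoc (fun i j => (ts i).realize (val j)) f : Fin (n + 1) → J → M) i j) =
        (Fin.snoc (fun i => (ts i).realize (val j)) (f j) : Fin (n + 1) → M) := by
      intro f j
      funext i
      refine Fin.lastCases ?_ (fun i => ?_) i
      · simp
      · simp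
    have hlos : ∀ f : J → M, φ.Realize default (Fin.snoc (Subtype.val ∘ x) (q f) : _ → Mst) ↔
        ∀ᶠ j in (U : Filter J), φ.Realize default
          (Fin.snoc (fun i => (ts i).realize (val j)) (f j) : _ → M) := by
      intro f
      rw [hsn f]
      have h := Ultraproduct.boundedFormula_realize_cast (M := fun _ : J => M) (u := U) φ
        (fun e => e.elim) (Fin.snoc (fun i j => (ts i).realize (val j)) f : Fin (n + 1) → J → M)
      simp only [hsn'] at h
      have e1 : (default : Empty → Mst) = fun e => q (e.elim : J → M) := Subsingleton.elim _ _
      have e2 : ∀ j : J, (fun e : Empty => (e.elim : J → M) j) = (default : Empty → M) :=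
        fun j => Subsingleton.elim _ _
      simp only [e2] at h
      rw [e1]
      exact h
    let t : (L.sum L.skolem₁).Term V :=
      Term.func (Sum.inr φ : (L.sum L.skolem₁).Functions n) ts
    refine ⟨⟨τ t, t, rfl⟩, ?_⟩
    refine (hlos _).2 ?_
    filter_upwards [(hlos y).1 hφ] with j hj
    exact Classical.epsilon_spec (p := fun z => φ.Realize default
      (Fin.snoc (fun i => (ts i).realize (val j)) z : _ → M)) ⟨_, hj⟩
  have hsmall : Small.{max a b} S := small_range τ
  let e := equivShrink.{max a b} S
  letI : L.Structure (Shrink.{max a b} S) := e.inducedStructure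
  let σ : (L.sum L.skolem₁).Term V → Shrink.{max a b} S := fun t => e ⟨τ t, t, rfl⟩
  refine ⟨Shrink.{max a b} S, inferInstance, σ, ?_, ?_, ?_, ?_⟩
  · intro z
    obtain ⟨⟨_, t, rfl⟩, hs⟩ := e.surjective z
    exact ⟨t, hs⟩
  · intro t t'
    rw [← hq]
    simp only [σ, e.injective.eq_iff]
    exact Subtype.ext_iff
  · intro n r ts
    have h1 : RelMap r (fun i => σ (ts i)) ↔ RelMap r (fun i => τ (ts i)) := by
      change RelMap r (e.symm ∘ (fun i => σ (ts i))) ↔ _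
      have : e.symm ∘ (fun i => σ (ts i)) = fun i => ⟨τ (ts i), ts i, rfl⟩ := by
        funext i
        simp [σ]
      rw [this]
      exact Iff.rfl
    rw [h1]
    exact relMap_quotient_mk' (s := (U : Filter J).productSetoid _)
      (ps := Ultraproduct.setoidPrestructure _ U) r _ |>.trans Iff.rfl
  · have h1 : M ≅[L] Mst := by
      rw [elementarilyEquivalent_iff]
      intro φ
      rw [Ultraproduct.sentence_realize]
      simp
    have h2 : S ≅[L] Mst := (⟨S, hS⟩ : L.ElementarySubstructure Mst).elementarilyEquivalent
    have h3 : S ≅[L] Shrink.{max a b} S := (e.inducedStructureEquiv (L := L)).toElementaryEmbedding.elementarilyEquivalent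
    exact h1.trans (h2.symm.trans h3)

end Hull

theorem exists_pattern {mu : Cardinal.{u}} (hmu : ℵ₀ ≤ mu) (hpow : mu ^< mu = mu) :
    ∃ (I Col : Type u) (_ : LinearOrder I) (f : List I → Col), #I = Order.succ mu ∧ #Col ≤ mu ∧
      ∀ (K D : Type w) (lam : Cardinal.{w}), ℵ₀ ≤ lam → lam < #K → #D ≤ lam →
      ∀ (g : List K → D) (W : Finset I), ∃ x : I → K, Set.InjOn x W ∧
        ∀ l l' : List I, l.Pairwise (· < ·) → l'.Pairwise (· < ·) →
          (∀ a ∈ l, a ∈ W) → (∀ a ∈ l', a ∈ W) → f l = f l' → g (l.map x) = g (l'.map x) := by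
  obtain ⟨X⟩ := exists_TS (isRegular_of_powerlt hmu hpow)
  choose cl hcl using exists_cl hmu hpow X
  have hne : Nonempty mu.ord.ToType := by
    rw [← Cardinal.mk_ne_zero_iff, mk_ord_toType]
    exact (lt_of_lt_of_le aleph0_pos hmu).ne'
  have hinf : Infinite mu.ord.ToType := by
    rw [Cardinal.infinite_iff, mk_ord_toType]
    exact hmu
  refine ⟨(Order.succ mu).ord.ToType, mu.ord.ToType × List mu.ord.ToType, inferInstance,
    X.col cl, mk_ord_toType _, ?_, ?_⟩
  · simp [Cardinal.mk_prod, Cardinal.mk_list_eq_mk, Cardinal.mul_eq_self hmu]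
  · intro K D lam hlam hK hD g W
    exact TS.realize hlam hK hD hcl g W

section Core
universe a b
open FirstOrder.Language.Structure

theorem realize_congr_left {L : FirstOrder.Language.{a, b}} {I C : Type*} [DecidableEq I]
    {M : Type w} [L.Structure M] (t : L.Term (I ⊕ C)) {v v' : I → M} {c : C → M}
    (h : ∀ i ∈ t.varFinsetLeft, v i = v' i) :
    t.realize (Sum.elim v c) = t.realize (Sum.elim v' c) := by
  induction t with
  | var i =>
    rcases i with i | i
    · exact h i (by simp [Term.varFinsetLeft])
    · rfl
  | func f ts ih =>
    simp only [Term.realize]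
    congr 1
    funext i
    refine ih i (fun j hj => h j ?_)
    simp only [Term.varFinsetLeft, Finset.mem_biUnion, Finset.mem_univ, true_and]
    exact ⟨i, hj⟩

theorem core (L : FirstOrder.Language.{a, b}) {mu : Cardinal.{max a b}} (hmu : ℵ₀ ≤ mu)
    (hpow : mu ^< mu = mu) (hL : L.card ≤ mu) (P : L.Relations 1) {M : Type w} [L.Structure M]
    {lam : Cardinal.{w}} (hlam : ℵ₀ ≤ lam) (hM : lam < #M)
    (hP : #{x : M // RelMap P ![x]} = lam) :
    ∃ (N : Type (max a b)) (_ : L.Structure N), (M ≅[L] N) ∧ #N = Order.succ mu ∧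
      #{x : N // RelMap P ![x]} = mu := by
  classical
  obtain ⟨I, Col, _, f, hI, hCol, hreal⟩ := exists_pattern.{max a b, w} hmu hpow
  have hMne : Nonempty M := by
    rw [← Cardinal.mk_ne_zero_iff]
    exact (lt_of_le_of_lt zero_le hM).ne'
  let LS := L.sum L.skolem₁
  let C : Type (max a b) := mu.ord.ToType
  have hC : #C = mu := mk_ord_toType mu
  have hfun : #(Σ n, LS.Functions n) ≤ mu := card_functions_sum_skolem₁_le.trans (max_le hmu hL)
  let Tm0 := LS.Term (ULift.{max a b} ℕ ⊕ C)
  have hTm0 : #Tm0 ≤ mu := by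
    refine Term.card_le.trans (max_le hmu ?_)
    rw [Cardinal.mk_sum, Cardinal.mk_sum, Cardinal.mk_uLift, Cardinal.mk_nat, hC]
    simp only [Cardinal.lift_aleph0, Cardinal.lift_id]
    exact Cardinal.add_le_of_le hmu (Cardinal.add_le_of_le hmu hmu le_rfl) hfun
  let Pm := {x : M // RelMap P ![x]}
  have hPinf : Infinite Pm := by
    rw [Cardinal.infinite_iff, hP]
    exact hlam
  let J := Finset I × Finset Tm0 × Finset C
  have hc : ∀ j : J, ∃ c : C → Pm, Set.InjOn c j.2.2 := by
    intro j
    let e := j.2.2.equivFin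
    let em := Infinite.natEmbedding Pm
    refine ⟨fun i => if h : i ∈ j.2.2 then em (e ⟨i, h⟩) else em 0, ?_⟩
    intro i hi i' hi' h
    simp only [dif_pos (Finset.mem_coe.1 hi), dif_pos (Finset.mem_coe.1 hi')] at h
    exact congrArg Subtype.val (e.injective (Fin.val_injective (em.injective h)))
  choose cc hcc using hc
  let d0 : M := Classical.arbitrary M
  let lv : List M → ULift.{max a b} ℕ → M := fun l i => l.getD i.down d0
  have hx : ∀ j : J, ∃ x : I → M, Set.InjOn x j.1 ∧
      ∀ l l' : List I, l.Pairwise (· < ·) → l'.Pairwise (· < ·) →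
        (∀ a ∈ l, a ∈ j.1) → (∀ a ∈ l', a ∈ j.1) → f l = f l' →
        ∀ t ∈ j.2.1, ∀ y z : M,
          t.realize (Sum.elim (lv (l.map x)) (fun i => (cc j i : M))) = y →
          t.realize (Sum.elim (lv (l'.map x)) (fun i => (cc j i : M))) = z →
          RelMap P ![y] → RelMap P ![z] → y = z := by
    intro j
    let D := Fin j.2.1.card → Option Pm
    have hOpt : #(Option Pm) = lam := by
      rw [Cardinal.mk_option, hP]
      exact Cardinal.add_one_eq hlam
    have hD : #D ≤ lam := by
      simp only [D, Cardinal.mk_pi, Cardinal.prod_const, hOpt, Cardinal.mk_fin,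
        Cardinal.lift_natCast, Cardinal.lift_uzero, Cardinal.power_natCast]
      exact Cardinal.power_nat_le hlam
    let e := j.2.1.equivFin
    let g : List M → D := fun l i =>
      if h : RelMap P ![(e.symm i).1.realize (Sum.elim (lv l) (fun i => (cc j i : M)))] then
        some ⟨_, h⟩ else none
    obtain ⟨x, hx, hx'⟩ := hreal M D lam hlam hM hD g j.1
    refine ⟨x, hx, ?_⟩
    intro l l' hl hl' hlj hlj' hf t ht y z hy hz hPy hPz
    have h := congrFun (hx' l l' hl hl' hlj hlj' hf) (e ⟨t, ht⟩)
    subst hy hz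
    simp only [g, Equiv.symm_apply_apply] at h
    rw [dif_pos hPy, dif_pos hPz] at h
    exact congrArg Subtype.val (Option.some.inj h)
  choose xx hxi hxx using hx
  let U : Ultrafilter J := Ultrafilter.of Filter.atTop
  have hU : ∀ {p : J → Prop}, (∃ j0, ∀ j ≥ j0, p j) → ∀ᶠ j in (U : Filter J), p j := by
    rintro p ⟨j0, h⟩
    exact Ultrafilter.of_le Filter.atTop (Filter.eventually_atTop.2 ⟨j0, h⟩)
  let val : J → I ⊕ C → M := fun j => Sum.elim (xx j) (fun i => (cc j i : M))
  obtain ⟨N, instN, σ, hσ, hσe, hσr, hMN⟩ := exists_hull L U val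
  have hσP : ∀ t, RelMap P ![σ t] ↔ ∀ᶠ j in (U : Filter J), RelMap P ![t.realize (val j)] := by
    intro t
    have := hσr P ![t]
    convert this using 2
    · funext i; fin_cases i; rfl
    · congr! 2 with j
      ext i; fin_cases i; rfl
  refine ⟨N, instN, hMN, le_antisymm ?_ ?_, le_antisymm ?_ ?_⟩
  · refine (Cardinal.mk_le_of_surjective hσ).trans ?_
    refine Term.card_le.trans (max_le (hmu.trans (Order.le_succ mu)) ?_)
    rw [Cardinal.mk_sum, Cardinal.mk_sum, hC, hI]
    simp only [Cardinal.lift_id]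
    have hmu' := hmu.trans (Order.le_succ mu)
    exact Cardinal.add_le_of_le hmu' (Cardinal.add_le_of_le hmu' le_rfl (Order.le_succ mu))
      (hfun.trans (Order.le_succ mu))
  · rw [← hI]
    refine Cardinal.mk_le_of_injective (f := fun i => σ (Term.var (Sum.inl i))) ?_
    intro i i' h
    by_contra hne
    have h1 := (hσe _ _).1 h
    have h2 : ∀ᶠ j in (U : Filter J), i ∈ j.1 ∧ i' ∈ j.1 := hU ⟨({i, i'}, ∅, ∅), fun j hj => by
      have := hj.1
      simp only at this
      exact ⟨this (by simp), this (by simp)⟩⟩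
    obtain ⟨j, h3, h4, h5⟩ := (h1.and h2).exists
    exact hne (hxi j h4 h5 h3)
  · let wl : LS.Term (I ⊕ C) → List I := fun t => t.varFinsetLeft.sort (· ≤ ·)
    let t0 : LS.Term (I ⊕ C) → Tm0 := fun t =>
      t.relabel (Sum.map (fun i => ULift.up ((wl t).idxOf i)) id)
    have ht0 : ∀ t j, (t0 t).realize (Sum.elim (lv ((wl t).map (xx j))) (fun i => (cc j i : M))) =
        t.realize (val j) := by
      intro t j
      simp only [t0, Term.realize_relabel]
      rw [Sum.elim_comp_map]
      refine realize_congr_left t ?_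
      intro i hi
      have : i ∈ wl t := by simpa [wl] using hi
      simp only [lv, Function.comp]
      rw [List.getD_eq_getElem _ _ (by simpa using List.idxOf_lt_length_of_mem this)]
      simp
    choose tt htt using hσ
    have hle : #(Tm0 × Col) ≤ mu := by
      simp only [Cardinal.mk_prod, Cardinal.lift_id]
      exact (mul_le_mul' hTm0 hCol).trans (Cardinal.mul_eq_self hmu).le
    refine le_trans (Cardinal.mk_le_of_injective
      (f := fun z : {x : N // RelMap P ![x]} => (t0 (tt z.1), f (wl (tt z.1)))) ?_) hle
    rintro ⟨z, hz⟩ ⟨z', hz'⟩ h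
    simp only [Prod.mk.injEq] at h
    obtain ⟨h1, h2⟩ := h
    rw [Subtype.mk.injEq, ← htt z, ← htt z', hσe]
    rw [← htt z, hσP] at hz
    rw [← htt z', hσP] at hz'
    have h3 : ∀ᶠ j in (U : Filter J), (wl (tt z)).toFinset ∪ (wl (tt z')).toFinset ⊆ j.1 ∧
        t0 (tt z) ∈ j.2.1 :=
      hU ⟨((wl (tt z)).toFinset ∪ (wl (tt z')).toFinset, {t0 (tt z)}, ∅), fun j hj =>
        ⟨hj.1, hj.2.1 (by simp)⟩⟩
    filter_upwards [hz, hz', h3] with j hj hj' h3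
    refine hxx j (wl (tt z)) (wl (tt z')) (Finset.sortedLT_sort _).pairwise
      (Finset.sortedLT_sort _).pairwise ?_ ?_ h2 _ h3.2 _ _ (ht0 _ j) ?_ hj hj'
    · intro i hi
      exact h3.1 (by simp [hi])
    · intro i hi
      exact h3.1 (by simp [hi])
    · rw [h1]
      exact ht0 _ j
  · rw [← hC]
    have hcP : ∀ i : C, RelMap P ![σ (Term.var (Sum.inr i))] := fun i =>
      (hσP _).2 (Filter.Eventually.of_forall (fun j => (cc j i).2))
    refine Cardinal.mk_le_of_injective
      (f := fun i => (⟨σ (Term.var (Sum.inr i)), hcP i⟩ : {x : N // RelMap P ![x]})) ?_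
    intro i i' h
    by_contra hne
    have h1 := (hσe _ _).1 (congrArg Subtype.val h)
    have h2 : ∀ᶠ j in (U : Filter J), i ∈ j.2.2 ∧ i' ∈ j.2.2 := hU ⟨(∅, ∅, {i, i'}), fun j hj => by
      have := hj.2.2
      simp only at this
      exact ⟨this (by simp), this (by simp)⟩⟩
    obtain ⟨j, h3, h4, h5⟩ := (h1.and h2).exists
    exact hne (hcc j h4 h5 (Subtype.ext h3))

end Core

section Reduction
universe a b
open FirstOrder.Language.Structure

/-- The sublanguage of symbols in `A`. -/
def subLang (L : FirstOrder.Language.{a, b}) (A : Set L.Symbols) : FirstOrder.Language.{a, b} where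
  Functions n := {f : L.Functions n // (Sum.inl ⟨n, f⟩ : L.Symbols) ∈ A}
  Relations n := {r : L.Relations n // (Sum.inr ⟨n, r⟩ : L.Symbols) ∈ A}

/-- Inclusion of a sublanguage. -/
def subHom (L : FirstOrder.Language.{a, b}) (A : Set L.Symbols) : subLang L A →ᴸ L where
  onFunction _ f := f.1
  onRelation _ r := r.1

theorem subHom_injective (L : FirstOrder.Language.{a, b}) (A : Set L.Symbols) :
    (subHom L A).Injective :=
  ⟨fun {_} _ _ h => Subtype.ext h, fun {_} _ _ h => Subtype.ext h⟩

theorem subLang_card (L : FirstOrder.Language.{a, b}) (A : Set L.Symbols) :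
    (subLang L A).card ≤ #A := by
  let F : (subLang L A).Symbols → A := fun s => match s with
    | Sum.inl ⟨n, f⟩ => ⟨Sum.inl ⟨n, f.1⟩, f.2⟩
    | Sum.inr ⟨n, r⟩ => ⟨Sum.inr ⟨n, r.1⟩, r.2⟩
  refine Cardinal.mk_le_of_injective (f := F) ?_
  rintro (⟨n, f, hf⟩ | ⟨n, f, hf⟩) (⟨m, g, hg⟩ | ⟨m, g, hg⟩) h
  · simp only [F, Subtype.mk.injEq, Sum.inl.injEq, Sigma.mk.injEq] at h
    obtain ⟨rfl, h⟩ := h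
    obtain rfl := eq_of_heq h
    rfl
  · simp [F] at h
  · simp [F] at h
  · simp only [F, Subtype.mk.injEq, Sum.inr.injEq, Sigma.mk.injEq] at h
    obtain ⟨rfl, h⟩ := h
    obtain rfl := eq_of_heq h
    rfl

theorem term_finite {L : FirstOrder.Language.{a, b}} {α : Type*} (t : L.Term α) :
    ∃ F : Set L.Symbols, F.Finite ∧ ∀ A, F ⊆ A →
      ∃ t' : (subLang L A).Term α, (subHom L A).onTerm t' = t := by
  induction t with
  | var i => exact ⟨∅, Set.finite_empty, fun A _ => ⟨Term.var i, rfl⟩⟩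
  | @func n f ts ih =>
    choose F hF hF' using ih
    refine ⟨insert (Sum.inl ⟨n, f⟩) (⋃ i, F i), (Set.finite_iUnion hF).insert _, ?_⟩
    intro A hA
    have h1 : ∀ i, ∃ t' : (subLang L A).Term α, (subHom L A).onTerm t' = ts i := fun i =>
      hF' i A (((Set.subset_iUnion F i).trans (Set.subset_insert _ _)).trans hA)
    choose ts' hts' using h1
    let f' : (subLang L A).Functions n := ⟨f, hA (Set.mem_insert _ _)⟩
    refine ⟨Term.func f' ts', ?_⟩
    simp only [LHom.onTerm, hts']
    rfl

theorem formula_finite {L : FirstOrder.Language.{a, b}} {α : Type*} {n : ℕ}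
    (φ : L.BoundedFormula α n) :
    ∃ F : Set L.Symbols, F.Finite ∧ ∀ A, F ⊆ A →
      ∃ φ' : (subLang L A).BoundedFormula α n, (subHom L A).onBoundedFormula φ' = φ := by
  induction φ with
  | falsum => exact ⟨∅, Set.finite_empty, fun A _ => ⟨BoundedFormula.falsum, rfl⟩⟩
  | equal t₁ t₂ =>
    obtain ⟨F, hF, hF'⟩ := term_finite t₁
    obtain ⟨G, hG, hG'⟩ := term_finite t₂
    refine ⟨F ∪ G, hF.union hG, fun A hA => ?_⟩
    obtain ⟨s, hs⟩ := hF' A (Set.subset_union_left.trans hA)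
    obtain ⟨t, ht⟩ := hG' A (Set.subset_union_right.trans hA)
    refine ⟨BoundedFormula.equal s t, ?_⟩
    simp only [LHom.onBoundedFormula, hs, ht]
    rfl
  | @rel n l R ts =>
    have ih := fun i => term_finite (ts i)
    choose F hF hF' using ih
    refine ⟨insert (Sum.inr ⟨l, R⟩) (⋃ i, F i), (Set.finite_iUnion hF).insert _, ?_⟩
    intro A hA
    have h1 : ∀ i, ∃ t' : (subLang L A).Term _, (subHom L A).onTerm t' = ts i := fun i =>
      hF' i A (((Set.subset_iUnion F i).trans (Set.subset_insert _ _)).trans hA)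
    choose ts' hts' using h1
    let R' : (subLang L A).Relations l := ⟨R, hA (Set.mem_insert _ _)⟩
    refine ⟨BoundedFormula.rel R' ts', ?_⟩
    have : (subHom L A).onTerm ∘ ts' = ts := funext hts'
    simp only [LHom.onBoundedFormula, this]
    rfl
  | imp f₁ f₂ ih₁ ih₂ =>
    obtain ⟨F, hF, hF'⟩ := ih₁
    obtain ⟨G, hG, hG'⟩ := ih₂
    refine ⟨F ∪ G, hF.union hG, fun A hA => ?_⟩
    obtain ⟨s, hs⟩ := hF' A (Set.subset_union_left.trans hA)
    obtain ⟨t, ht⟩ := hG' A (Set.subset_union_right.trans hA)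
    refine ⟨BoundedFormula.imp s t, ?_⟩
    simp only [LHom.onBoundedFormula, hs, ht]
  | all f ih =>
    obtain ⟨F, hF, hF'⟩ := ih
    refine ⟨F, hF, fun A hA => ?_⟩
    obtain ⟨s, hs⟩ := hF' A hA
    refine ⟨BoundedFormula.all s, ?_⟩
    simp only [LHom.onBoundedFormula, hs]

theorem main (L : FirstOrder.Language.{a, b})
    (mu : Cardinal.{max a b}) (hmu : ℵ₀ ≤ mu) (hmupow : mu ^< mu = mu)
    (P : L.Relations 1) (T : L.Theory) (hT : #T ≤ mu)
    (lam : Cardinal.{w}) (hlam : ℵ₀ ≤ lam) (M : Type w) [L.Structure M] [M ⊨ T]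
    (hM : #M = Order.succ lam)
    (hP : #{x : M // RelMap P ![x]} = lam) :
    ∃ (N : Type (max a b)) (_ : L.Structure N), (N ⊨ T) ∧ #N = Order.succ mu ∧
      #{x : N // RelMap P ![x]} = mu := by
  classical
  choose F hF hF' using fun φ : T => formula_finite φ.1
  let A : Set L.Symbols := insert (Sum.inr ⟨1, P⟩) (⋃ φ, F φ)
  have hA : #A ≤ mu := by
    refine Cardinal.mk_insert_le.trans ?_
    refine Cardinal.add_le_of_le hmu ?_ ((Cardinal.one_le_aleph0).trans hmu)
    refine Cardinal.mk_iUnion_le_sum_mk.trans ?_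
    refine (Cardinal.sum_le_sum _ (fun _ => mu) (fun φ => ((hF φ).lt_aleph0.le.trans hmu))).trans ?_
    simp only [Cardinal.sum_const, Cardinal.lift_id]
    exact (mul_le_mul_left hT mu).trans (Cardinal.mul_eq_self hmu).le
  let ι := subHom L A
  let P' : (subLang L A).Relations 1 := ⟨P, Set.mem_insert _ _⟩
  letI : (subLang L A).Structure M := ι.reduct M
  obtain ⟨N, instN, hMN, hN, hNP⟩ := core (subLang L A) hmu hmupow ((subLang_card L A).trans hA) P'
    (M := M) hlam (by rw [hM]; exact Order.lt_succ lam) hP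
  have : Nonempty N := by
    rw [← Cardinal.mk_ne_zero_iff, hN]
    exact (lt_of_le_of_lt zero_le (Order.lt_succ mu)).ne'
  letI : Inhabited N := ⟨Classical.arbitrary N⟩
  letI instL : L.Structure N := ι.defaultExpansion N
  haveI hexp : ι.IsExpansionOn N := (subHom_injective L A).isExpansionOn_default N
  refine ⟨N, instL, ⟨fun φ hφ => ?_⟩, hN, ?_⟩
  · obtain ⟨φ', hφ'⟩ := hF' ⟨φ, hφ⟩ A ((Set.subset_iUnion F _).trans (Set.subset_insert _ _))
    have e : ι.onSentence φ' = φ := hφ'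
    have h1 : M ⊨ φ := Theory.realize_sentence_of_mem T hφ
    rw [← e] at h1 ⊢
    rw [LHom.realize_onSentence] at h1 ⊢
    exact (elementarilyEquivalent_iff.1 hMN φ').1 h1
  · rw [← hNP]
    congr 1
    have : ∀ x : N, RelMap P ![x] ↔ RelMap P' ![x] := fun x =>
      iff_of_eq (hexp.map_onRelation P' ![x])
    simp only [this]

end Reduction

end Chang

theorem chang_two_cardinal (L : FirstOrder.Language)
    (mu : Cardinal) (hmu : ℵ₀ ≤ mu) (hmupow : mu ^< mu = mu)
    (P : L.Relations 1) (T : L.Theory) (hT : Cardinal.mk T ≤ mu)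
    (lam : Cardinal) (hlam : ℵ₀ ≤ lam)
    (M : T.ModelType)
    (hM : Cardinal.mk M = Order.succ lam)
    (hP : Cardinal.mk {x : M // Structure.RelMap P ![x]} = lam) :
    ∃ N : T.ModelType,
      Cardinal.mk N = Order.succ mu ∧
      Cardinal.mk {x : N // Structure.RelMap P ![x]} = mu := by
  obtain ⟨N, instN, hNT, hN, hNP⟩ := Chang.main L mu hmu hmupow P T hT lam hlam M hM hP
  have hne : Nonempty N := by
    rw [← Cardinal.mk_ne_zero_iff, hN]
    exact (lt_of_le_of_lt zero_le (Order.lt_succ mu)).ne'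
  exact ⟨Theory.ModelType.of T N, hN, hNP⟩
end
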